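/- arXiv:1207.5295 — 12 statements merged into one kernel-verified Lean document; each statement's English description precedes it below -/
import Mathlib

section
/- Let A, B ∈ G(Z,C) and z* ∈ C⁻ \ {0}. Then A ⊕ H(z*) ⊇ B ⊕ H(z*) if and only if H(z*) −_{z*} B ⊇ H(z*) −_{z*} A. -/
open Set Topology Pointwise

noncomputable section

variable {X Z : Type*}

/-- The family `G(Z,C)` of subsets `A` with `A = cl co (A + C)`. -/
def Gset [AddCommGroup Z] [Module ℝ Z] [TopologicalSpace Z] (C : Set Z) : Set (Set Z) :=
  {A | A = closure (convexHull ℝ (A + C))}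

/-- `A ⊕ B = cl (A + B)` (Minkowski sum, with `A + ∅ = ∅`). -/
def oplus [AddCommGroup Z] [TopologicalSpace Z] (A B : Set Z) : Set Z :=
  closure (A + B)

/-- The homogeneous closed half-space `H(z*) = {z : z*(z) ≤ 0}`. -/
def Hset [TopologicalSpace Z] [AddCommGroup Z] [Module ℝ Z] (zs : Z →L[ℝ] ℝ) : Set Z :=
  {z | zs z ≤ 0}

/-- `A −_{z*} B = {z : B + z ⊆ A ⊕ H(z*)}`. -/
def resid [TopologicalSpace Z] [AddCommGroup Z] [Module ℝ Z]
    (zs : Z →L[ℝ] ℝ) (A B : Set Z) : Set Z :=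
  {z | ∀ b ∈ B, b + z ∈ oplus A (Hset zs)}

/-- Convexity of a set-valued function: `f(t x₁ + (1-t) x₂) ⊇ t f(x₁) ⊕ (1-t) f(x₂)`. -/
def ConvexSV [AddCommGroup X] [Module ℝ X] [TopologicalSpace Z] [AddCommGroup Z] [Module ℝ Z]
    (f : X → Set Z) : Prop :=
  ∀ x₁ x₂ : X, ∀ t : ℝ, 0 < t → t < 1 →
    oplus (t • f x₁) ((1 - t) • f x₂) ⊆ f (t • x₁ + (1 - t) • x₂)

/-- Directional derivative `f'_{z*}(x₀, x) = ⋂_{s>0} cl ⋃_{0<t<s} (1/t)(f(x₀+tx) −_{z*} f(x₀))`. -/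
def dirDer [AddCommGroup X] [Module ℝ X] [TopologicalSpace Z] [AddCommGroup Z] [Module ℝ Z]
    (zs : Z →L[ℝ] ℝ) (f : X → Set Z) (x₀ x : X) : Set Z :=
  ⋂ s ∈ Ioi (0:ℝ), closure (⋃ t ∈ Ioo (0:ℝ) s, (1 / t) • resid zs (f (x₀ + t • x)) (f x₀))

/-- `S_{(x*,z*)}(x) = {z : x*(x) + z*(z) ≤ 0}`. -/
def Sfun [TopologicalSpace X] [AddCommGroup X] [Module ℝ X]
    [TopologicalSpace Z] [AddCommGroup Z] [Module ℝ Z]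
    (xs : X →L[ℝ] ℝ) (zs : Z →L[ℝ] ℝ) (x : X) : Set Z :=
  {z | xs x + zs z ≤ 0}

/-- The `z*`-subdifferential of `f` at `x₀`. -/
def subdiff [TopologicalSpace X] [AddCommGroup X] [Module ℝ X]
    [TopologicalSpace Z] [AddCommGroup Z] [Module ℝ Z]
    (zs : Z →L[ℝ] ℝ) (f : X → Set Z) (x₀ : X) : Set (X →L[ℝ] ℝ) :=
  {xs | ∀ x : X, dirDer zs f x₀ x ⊆ Sfun xs zs x}

/-- Scalarization `φ_{f,z*}(x) = inf{−z*(z) : z ∈ f(x)}` taking values in `EReal`. -/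
def scalFn [TopologicalSpace Z] [AddCommGroup Z] [Module ℝ Z]
    (zs : Z →L[ℝ] ℝ) (f : X → Set Z) (x : X) : EReal :=
  ⨅ z ∈ f x, ((-(zs z) : ℝ) : EReal)

/-- Inf-residuation on `EReal`: `r −• s = inf {t ∈ ℝ : r ≤ s + t}`. -/
def eresid (r s : EReal) : EReal :=
  sInf {t : EReal | ∃ t' : ℝ, t = (t' : EReal) ∧ r ≤ s + (t' : EReal)}

/-- Scalar directional derivative `φ'_{f,z*}(x₀,x) = inf_{t>0} (1/t)(φ(x₀+tx) −• φ(x₀))`. -/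
def scalDer [AddCommGroup X] [Module ℝ X] [TopologicalSpace Z] [AddCommGroup Z] [Module ℝ Z]
    (zs : Z →L[ℝ] ℝ) (f : X → Set Z) (x₀ x : X) : EReal :=
  ⨅ t ∈ Ioi (0:ℝ), (((1 / t : ℝ) : EReal) * eresid (scalFn zs f (x₀ + t • x)) (scalFn zs f x₀))

/-- Inf-translation `f̂(x; M) = cl co ⋃_{m ∈ M} f(m + x)`. -/
def infTrans [AddCommGroup X] [TopologicalSpace Z] [AddCommGroup Z] [Module ℝ Z]
    (f : X → Set Z) (M : Set X) (x : X) : Set Z :=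
  closure (convexHull ℝ (⋃ m ∈ M, f (m + x)))

end

theorem stmt0 {Z : Type*} [AddCommGroup Z] [Module ℝ Z] [TopologicalSpace Z]
    [IsTopologicalAddGroup Z] [ContinuousSMul ℝ Z] [LocallyConvexSpace ℝ Z]
    (C : Set Z) (hCconv : Convex ℝ C) (hC0 : (0:Z) ∈ C)
    (hCcone : ∀ t : ℝ, 0 < t → t • C ⊆ C) (hclC : closure C ≠ Set.univ)
    (zs : Z →L[ℝ] ℝ) (hzs : ∀ z ∈ C, zs z ≤ 0) (hzs0 : zs ≠ 0)
    (A B : Set Z) (hA : A ∈ Gset C) (hB : B ∈ Gset C) :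
    oplus B (Hset zs) ⊆ oplus A (Hset zs) ↔
      resid zs (Hset zs) A ⊆ resid zs (Hset zs) B := by
  have hmono : ∀ (S : Set Z) (r : ℝ), (∀ a ∈ S, zs a ≤ r) →
      ∀ w ∈ oplus S (Hset zs), zs w ≤ r := by
    intro S r hS w hw
    have hcl : IsClosed {w : Z | zs w ≤ r} := isClosed_le zs.continuous continuous_const
    have hsub : S + Hset zs ⊆ {w : Z | zs w ≤ r} := by
      rintro _ ⟨a, ha, h, hh, rfl⟩
      have h1 := hS a ha
      have h2 : zs h ≤ 0 := hh
      simp only [Set.mem_setOf_eq, map_add]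
      linarith
    exact closure_minimal hsub hcl hw
  have h0 : (0 : Z) ∈ Hset zs := by simp [Hset]
  have hres : ∀ (S : Set Z) (z : Z),
      z ∈ resid zs (Hset zs) S ↔ ∀ b ∈ S, zs b + zs z ≤ 0 := by
    intro S z
    constructor
    · intro hz b hb
      have := hmono (Hset zs) 0 (fun a ha => ha) _ (hz b hb)
      simpa using this
    · intro hz b hb
      refine subset_closure ⟨b + z, ?_, 0, h0, by simp⟩
      have := hz b hb
      simpa [Hset] using this
  constructor
  · intro hsub z hz
    rw [hres] at hz ⊢
    intro b hb
    have hb' : b ∈ oplus B (Hset zs) := subset_closure ⟨b, hb, 0, h0, by simp⟩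
    have := hmono A (-zs z) (fun a ha => by linarith [hz a ha]) b (hsub hb')
    linarith
  · intro hsub
    obtain ⟨u, hu⟩ : ∃ u, zs u = 1 := by
      obtain ⟨v, hv⟩ : ∃ v, zs v ≠ 0 := by
        by_contra hcon
        push Not at hcon
        exact hzs0 (ContinuousLinearMap.ext hcon)
      exact ⟨(zs v)⁻¹ • v, by simp [hv]⟩
    refine closure_minimal ?_ isClosed_closure
    rintro _ ⟨b, hb, h, hh, rfl⟩
    have hh' : zs h ≤ 0 := hh
    have key : ∀ ε : ℝ, 0 < ε → (b + h) - ε • u ∈ A + Hset zs := by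
      intro ε hε
      obtain ⟨a, ha, hle⟩ : ∃ a ∈ A, zs (b + h) - ε ≤ zs a := by
        by_contra hcon
        push Not at hcon
        have hz : (-(zs (b + h) - ε)) • u ∈ resid zs (Hset zs) A := by
          rw [hres]
          intro a ha
          have := hcon a ha
          rw [map_smul, hu, smul_eq_mul]
          linarith
        have h3 := (hres B _).1 (hsub hz) b hb
        rw [map_smul, hu, smul_eq_mul, map_add] at h3
        linarith
      refine ⟨a, ha, (b + h) - ε • u - a, ?_, by simp⟩
      change zs _ ≤ 0
      rw [map_sub, map_sub, map_smul, hu, smul_eq_mul]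
      linarith
    have hc : Continuous (fun ε : ℝ => (b + h) - ε • u) := by fun_prop
    have ht : Filter.Tendsto (fun ε : ℝ => (b + h) - ε • u) (𝓝[>] 0) (𝓝 (b + h)) := by
      have := (hc.tendsto 0).mono_left (nhdsWithin_le_nhds (s := Set.Ioi 0))
      simpa using this
    exact mem_closure_of_tendsto ht
      (Filter.mem_of_superset self_mem_nhdsWithin (fun ε hε => key ε hε))
end

section
/- Let A, B ∈ G(Z,C) and z* ∈ C⁻ \ {0}. Then A −_{z*} B ∉ {Z, ∅} if and only if both A ⊕ H(z*) ∉ {Z, ∅} and B ⊕ H(z*) ∉ {Z, ∅}. -/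
open Set Topology Pointwise

theorem aux_mem {Z : Type*} [AddCommGroup Z] [Module ℝ Z] [TopologicalSpace Z]
    (zs : Z →L[ℝ] ℝ) (A : Set Z) {a z : Z} (ha : a ∈ A) (h : zs z ≤ zs a) :
    z ∈ oplus A (Hset zs) := by
  apply subset_closure
  refine Set.mem_add.2 ⟨a, ha, z - a, ?_, by abel⟩
  show zs (z - a) ≤ 0
  rw [map_sub]; linarith

theorem aux_le {Z : Type*} [AddCommGroup Z] [Module ℝ Z] [TopologicalSpace Z]
    (zs : Z →L[ℝ] ℝ) (A : Set Z) {M : ℝ} {z : Z} (hM : ∀ a ∈ A, zs a ≤ M)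
    (h : z ∈ oplus A (Hset zs)) : zs z ≤ M := by
  have hc : IsClosed {z : Z | zs z ≤ M} := isClosed_le zs.continuous continuous_const
  refine closure_minimal ?_ hc h
  intro w hw
  obtain ⟨a, ha, b, hb, rfl⟩ := Set.mem_add.1 hw
  have h1 := hM a ha
  have h2 : zs b ≤ 0 := hb
  show zs (a + b) ≤ M
  rw [map_add]; linarith

theorem aux_surj {Z : Type*} [AddCommGroup Z] [Module ℝ Z] [TopologicalSpace Z]
    (zs : Z →L[ℝ] ℝ) (h : zs ≠ 0) (r : ℝ) : ∃ z, zs z = r := by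
  obtain ⟨e, he⟩ : ∃ e, zs e ≠ 0 := by
    by_contra hc
    push Not at hc
    exact h (ContinuousLinearMap.ext hc)
  exact ⟨(r / zs e) • e, by rw [map_smul, smul_eq_mul]; field_simp⟩

theorem aux_univ {Z : Type*} [AddCommGroup Z] [Module ℝ Z] [TopologicalSpace Z]
    (zs : Z →L[ℝ] ℝ) (h0 : zs ≠ 0) (A : Set Z) :
    oplus A (Hset zs) ≠ Set.univ ↔ ∃ M : ℝ, ∀ a ∈ A, zs a ≤ M := by
  constructor
  · intro h
    by_contra hc
    push Not at hc
    apply h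
    rw [Set.eq_univ_iff_forall]
    intro z
    obtain ⟨a, ha, hlt⟩ := hc (zs z)
    exact aux_mem zs A ha hlt.le
  · rintro ⟨M, hM⟩ h
    obtain ⟨z, hz⟩ := aux_surj zs h0 (M + 1)
    have := aux_le zs A hM (h ▸ Set.mem_univ z : z ∈ oplus A (Hset zs))
    linarith

theorem aux_empty {Z : Type*} [AddCommGroup Z] [Module ℝ Z] [TopologicalSpace Z]
    (zs : Z →L[ℝ] ℝ) (A : Set Z) :
    oplus A (Hset zs) ≠ ∅ ↔ A.Nonempty := by
  rw [← Set.nonempty_iff_ne_empty]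
  constructor
  · intro h
    exact (closure_nonempty_iff.1 h).of_add_left
  · rintro ⟨a, ha⟩
    exact ⟨a, aux_mem zs A ha le_rfl⟩

theorem stmt1 {Z : Type*} [AddCommGroup Z] [Module ℝ Z] [TopologicalSpace Z]
    [IsTopologicalAddGroup Z] [ContinuousSMul ℝ Z] [LocallyConvexSpace ℝ Z]
    (C : Set Z) (hCconv : Convex ℝ C) (hC0 : (0:Z) ∈ C)
    (hCcone : ∀ t : ℝ, 0 < t → t • C ⊆ C) (hclC : closure C ≠ Set.univ)
    (zs : Z →L[ℝ] ℝ) (hzs : ∀ z ∈ C, zs z ≤ 0) (hzs0 : zs ≠ 0)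
    (A B : Set Z) (hA : A ∈ Gset C) (hB : B ∈ Gset C) :
    (resid zs A B ≠ Set.univ ∧ resid zs A B ≠ ∅) ↔
      ((oplus A (Hset zs) ≠ Set.univ ∧ oplus A (Hset zs) ≠ ∅) ∧
        (oplus B (Hset zs) ≠ Set.univ ∧ oplus B (Hset zs) ≠ ∅)) := by
  rw [aux_univ zs hzs0, aux_univ zs hzs0, aux_empty, aux_empty]
  constructor
  · rintro ⟨hu, he⟩
    obtain ⟨z, hz⟩ := Set.nonempty_iff_ne_empty.2 he
    have hBn : B.Nonempty := by
      by_contra hc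
      rw [Set.not_nonempty_iff_eq_empty] at hc
      apply hu
      rw [Set.eq_univ_iff_forall]
      intro w b hb
      rw [hc] at hb
      exact hb.elim
    have hAu : ∃ M : ℝ, ∀ a ∈ A, zs a ≤ M := by
      rw [← aux_univ zs hzs0]
      intro hc
      apply hu
      rw [Set.eq_univ_iff_forall]
      intro w b hb
      rw [hc]
      trivial
    obtain ⟨b, hb⟩ := hBn
    refine ⟨⟨hAu, (aux_empty zs A).1 (Set.nonempty_iff_ne_empty.1 ⟨_, hz b hb⟩)⟩, ?_, ⟨b, hb⟩⟩
    obtain ⟨M, hM⟩ := hAu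
    refine ⟨M - zs z, fun b hb => ?_⟩
    have := aux_le zs A hM (hz b hb)
    rw [map_add] at this
    linarith
  · rintro ⟨⟨⟨M, hM⟩, a, ha⟩, ⟨N, hN⟩, b, hb⟩
    constructor
    · intro h
      obtain ⟨z, hz⟩ := aux_surj zs hzs0 (M - zs b + 1)
      have hm : z ∈ resid zs A B := h ▸ Set.mem_univ z
      have := aux_le zs A hM (hm b hb)
      rw [map_add] at this
      linarith
    · rw [← Set.nonempty_iff_ne_empty]
      obtain ⟨z, hz⟩ := aux_surj zs hzs0 (zs a - N)
      refine ⟨z, fun b hb => aux_mem zs A ha ?_⟩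
      have := hN b hb
      rw [map_add]
      linarith
end

section
/- Let A, B ∈ G(Z,C) and z* ∈ C⁻ \ {0}. Then (A ⊕ B) −_{z*} B ⊇ A ⊕ H(z*). The inclusion is strict if and only if either A = B = ∅, or A ⊕ H(z*) ∉ {Z, ∅} and B ⊕ H(z*) ∈ {Z, ∅}. -/
open Set Topology Pointwise

section helpers
variable {W : Type*} [AddCommGroup W] [Module ℝ W] [TopologicalSpace W]
    [IsTopologicalAddGroup W] [ContinuousSMul ℝ W]

lemma mem_oplusH (zs : W →L[ℝ] ℝ) (hzs0 : zs ≠ 0) (A : Set W) (z : W) :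
    z ∈ oplus A (Hset zs) ↔ ∀ ε : ℝ, 0 < ε → ∃ a ∈ A, zs z < zs a + ε := by
  constructor
  · intro hz ε hε
    have ho : IsOpen {w : W | zs z - ε < zs w} := isOpen_lt continuous_const zs.continuous
    obtain ⟨w, hw, hw2⟩ := mem_closure_iff.1 hz _ ho (by simp [hε])
    obtain ⟨a, ha, h, hh, rfl⟩ := Set.mem_add.1 hw2
    refine ⟨a, ha, ?_⟩
    have h1 : zs z - ε < zs (a + h) := hw
    have h2 : zs h ≤ 0 := hh
    rw [map_add] at h1
    linarith
  · intro h
    obtain ⟨e, he⟩ : ∃ e, zs e ≠ 0 := by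
      by_contra! hc
      exact hzs0 (ContinuousLinearMap.ext (by simpa using hc))
    have hc : Continuous (fun t : ℝ => z - t • ((zs e)⁻¹ • e)) := by fun_prop
    have ht : Filter.Tendsto (fun t : ℝ => z - t • ((zs e)⁻¹ • e)) (𝓝[>] 0) (𝓝 z) := by
      have := (hc.tendsto 0).mono_left (nhdsWithin_le_nhds (s := Set.Ioi 0))
      simpa using this
    refine mem_closure_of_tendsto ht ?_
    filter_upwards [self_mem_nhdsWithin] with t ht
    obtain ⟨a, ha, hlt⟩ := h t ht
    refine Set.mem_add.2 ⟨a, ha, z - t • ((zs e)⁻¹ • e) - a, ?_, by abel⟩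
    change zs _ ≤ 0
    simp only [map_sub, map_smul, smul_eq_mul, inv_mul_cancel₀ he]
    linarith

lemma mem_oplus2H (zs : W →L[ℝ] ℝ) (hzs0 : zs ≠ 0) (A B : Set W) (z : W) :
    z ∈ oplus (oplus A B) (Hset zs) ↔
      ∀ ε : ℝ, 0 < ε → ∃ a ∈ A, ∃ b ∈ B, zs z < zs a + zs b + ε := by
  rw [mem_oplusH zs hzs0]
  constructor
  · intro h ε hε
    obtain ⟨c, hc, hlt⟩ := h (ε/2) (by linarith)
    have ho : IsOpen {w : W | zs c - ε/2 < zs w} := isOpen_lt continuous_const zs.continuous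
    obtain ⟨w, hw, hw2⟩ := mem_closure_iff.1 hc _ ho (by simp [hε])
    obtain ⟨a, ha, b, hb, rfl⟩ := Set.mem_add.1 hw2
    have h1 : zs c - ε/2 < zs (a + b) := hw
    rw [map_add] at h1
    exact ⟨a, ha, b, hb, by linarith⟩
  · intro h ε hε
    obtain ⟨a, ha, b, hb, hlt⟩ := h ε hε
    exact ⟨a + b, subset_closure (Set.add_mem_add ha hb), by rw [map_add]; exact hlt⟩

end helpers

theorem stmt3 {Z : Type*} [AddCommGroup Z] [Module ℝ Z] [TopologicalSpace Z]
    [IsTopologicalAddGroup Z] [ContinuousSMul ℝ Z] [LocallyConvexSpace ℝ Z]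
    (C : Set Z) (hCconv : Convex ℝ C) (hC0 : (0:Z) ∈ C)
    (hCcone : ∀ t : ℝ, 0 < t → t • C ⊆ C) (hclC : closure C ≠ Set.univ)
    (zs : Z →L[ℝ] ℝ) (hzs : ∀ z ∈ C, zs z ≤ 0) (hzs0 : zs ≠ 0)
    (A B : Set Z) (hA : A ∈ Gset C) (hB : B ∈ Gset C) :
    oplus A (Hset zs) ⊆ resid zs (oplus A B) B ∧
    (oplus A (Hset zs) ⊂ resid zs (oplus A B) B ↔
      (A = ∅ ∧ B = ∅) ∨
        ((oplus A (Hset zs) ≠ Set.univ ∧ oplus A (Hset zs) ≠ ∅) ∧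
          (oplus B (Hset zs) = Set.univ ∨ oplus B (Hset zs) = ∅))) := by
  have hsub : oplus A (Hset zs) ⊆ resid zs (oplus A B) B := by
    intro z hz b hb
    rw [mem_oplusH zs hzs0] at hz
    rw [mem_oplus2H zs hzs0]
    intro ε hε
    obtain ⟨a, ha, h⟩ := hz ε hε
    exact ⟨a, ha, b, hb, by rw [map_add]; linarith⟩
  have hne : ∀ D : Set Z, D.Nonempty → oplus D (Hset zs) ≠ ∅ := by
    rintro D ⟨d, hd⟩ h
    have : d ∈ oplus D (Hset zs) := by
      rw [mem_oplusH zs hzs0]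
      exact fun ε hε => ⟨d, hd, by linarith⟩
    rw [h] at this
    exact this
  have hemp : oplus (∅ : Set Z) (Hset zs) = ∅ := by simp [oplus]
  refine ⟨hsub, ?_⟩
  rw [Set.ssubset_iff_subset_ne]
  rcases B.eq_empty_or_nonempty with rfl | hBn
  · have hr : resid zs (oplus A ∅) ∅ = Set.univ := by
      ext z; simp [resid]
    rw [hr, hemp]
    rcases A.eq_empty_or_nonempty with rfl | hAn
    · simp [hemp, Set.empty_ne_univ]
    · simp [hAn.ne_empty, hne A hAn]
  rcases A.eq_empty_or_nonempty with rfl | hAn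
  · have hr : resid zs (oplus ∅ B) B = ∅ := by
      obtain ⟨b, hb⟩ := hBn
      ext z
      simp only [Set.mem_empty_iff_false, iff_false]
      intro h
      have := h b hb
      simp [oplus] at this
    simp [hr, hemp, hBn.ne_empty]
  by_cases hBu : oplus B (Hset zs) = Set.univ
  · have hr : resid zs (oplus A B) B = Set.univ := by
      obtain ⟨a, ha⟩ := hAn
      refine Set.eq_univ_of_forall fun z b hb => ?_
      rw [mem_oplus2H zs hzs0]
      intro ε hε
      have hm : b + z - a ∈ oplus B (Hset zs) := hBu ▸ Set.mem_univ _
      obtain ⟨b', hb', h⟩ := (mem_oplusH zs hzs0 _ _).1 hm ε hε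
      rw [map_sub] at h
      exact ⟨a, ha, b', hb', by linarith⟩
    simp [hr, hBu, hAn.ne_empty, hne A hAn]
  · have hr : oplus A (Hset zs) = resid zs (oplus A B) B := by
      refine hsub.antisymm fun z hz => ?_
      obtain ⟨w, hw⟩ := (Set.ne_univ_iff_exists_notMem _).1 hBu
      rw [mem_oplusH zs hzs0] at hw ⊢
      push Not at hw
      obtain ⟨δ, hδ, hw⟩ := hw
      have hbdd : BddAbove (zs '' B) := by
        refine ⟨zs w, ?_⟩
        rintro _ ⟨b, hb, rfl⟩
        have := hw b hb
        linarith
      intro ε hε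
      obtain ⟨_, ⟨b, hb, rfl⟩, hlt⟩ :=
        exists_lt_of_lt_csSup (hBn.image zs) (show sSup (zs '' B) - ε/2 < sSup (zs '' B) by linarith)
      obtain ⟨a, ha, b', hb', h⟩ := (mem_oplus2H zs hzs0 _ _ _).1 (hz b hb) (ε/2) (by linarith)
      have := le_csSup hbdd (Set.mem_image_of_mem zs hb')
      rw [map_add] at h
      exact ⟨a, ha, by linarith⟩
    simp [← hr, hBu, hAn.ne_empty, hne B hBn]
end

section
/- Let A, B ∈ G(Z,C) and z* ∈ C⁻ \ {0}. Then A ⊕ H(z*) ⊇ (A −_{z*} B) ⊕ B. The inclusion is strict if and only if either B = ∅ and A ≠ ∅, or A ⊕ H(z*) ∉ {Z, ∅} and B ⊕ H(z*) = Z. -/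
open Set Topology Pointwise

theorem smallNhd {Z : Type*} [AddCommGroup Z] [Module ℝ Z] [TopologicalSpace Z]
    [IsTopologicalAddGroup Z] [ContinuousSMul ℝ Z] (S : Set Z) (z e : Z)
    (h : ∀ t : ℝ, 0 < t → z - t • e ∈ S) : z ∈ closure S := by
  have hc : Continuous (fun t : ℝ => z - t • e) := by fun_prop
  have h0 : (0:ℝ) ∈ closure (Set.Ioi (0:ℝ)) := by simp
  have := map_mem_closure hc h0 (fun t ht => h t ht)
  simpa using this

theorem mem_oplus_H {Z : Type*} [AddCommGroup Z] [Module ℝ Z] [TopologicalSpace Z]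
    [IsTopologicalAddGroup Z] [ContinuousSMul ℝ Z]
    (zs : Z →L[ℝ] ℝ) (e : Z) (he : zs e = 1) (S : Set Z) (z : Z) :
    z ∈ oplus S (Hset zs) ↔ ∀ ε : ℝ, 0 < ε → ∃ s ∈ S, zs z < zs s + ε := by
  constructor
  · intro hz ε hε
    have ho : IsOpen {w | zs z - ε < zs w} := isOpen_lt continuous_const zs.continuous
    obtain ⟨w, hw, s, hs, k, hk, rfl⟩ := mem_closure_iff.1 hz _ ho (by simpa using hε)
    refine ⟨s, hs, ?_⟩
    have hk' : zs k ≤ 0 := hk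
    have hw' : zs z - ε < zs (s + k) := hw
    rw [map_add] at hw'
    linarith
  · intro h
    refine smallNhd _ z e fun t ht => ?_
    obtain ⟨s, hs, hlt⟩ := h t ht
    refine ⟨s, hs, z - t • e - s, ?_, by simp⟩
    change zs (z - t • e - s) ≤ 0
    simp only [map_sub, map_smul, he, smul_eq_mul, mul_one]
    linarith

theorem stmt4 {Z : Type*} [AddCommGroup Z] [Module ℝ Z] [TopologicalSpace Z]
    [IsTopologicalAddGroup Z] [ContinuousSMul ℝ Z] [LocallyConvexSpace ℝ Z]
    (C : Set Z) (hCconv : Convex ℝ C) (hC0 : (0:Z) ∈ C)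
    (hCcone : ∀ t : ℝ, 0 < t → t • C ⊆ C) (hclC : closure C ≠ Set.univ)
    (zs : Z →L[ℝ] ℝ) (hzs : ∀ z ∈ C, zs z ≤ 0) (hzs0 : zs ≠ 0)
    (A B : Set Z) (hA : A ∈ Gset C) (hB : B ∈ Gset C) :
    oplus (resid zs A B) B ⊆ oplus A (Hset zs) ∧
    (oplus (resid zs A B) B ⊂ oplus A (Hset zs) ↔
      (B = ∅ ∧ A ≠ ∅) ∨
        ((oplus A (Hset zs) ≠ Set.univ ∧ oplus A (Hset zs) ≠ ∅) ∧
          oplus B (Hset zs) = Set.univ)) := by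
  obtain ⟨e, he⟩ : ∃ e, zs e = 1 := by
    obtain ⟨v, hv⟩ : ∃ v, zs v ≠ 0 := by
      by_contra! hh
      exact hzs0 (by ext v; simpa using hh v)
    exact ⟨(zs v)⁻¹ • v, by simp [hv]⟩
  have key := mem_oplus_H zs e he
  have hsub : oplus (resid zs A B) B ⊆ oplus A (Hset zs) := by
    refine closure_minimal ?_ isClosed_closure
    rintro _ ⟨r, hr, b, hb, rfl⟩
    have := hr b hb
    rwa [add_comm] at this
  refine ⟨hsub, ?_⟩
  have h0H : (0:Z) ∈ Hset zs := by simp [Hset]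
  have hAne : ∀ S : Set Z, S.Nonempty → (oplus S (Hset zs)).Nonempty := by
    rintro S ⟨a, ha⟩
    exact ⟨a + 0, subset_closure ⟨a, ha, 0, h0H, rfl⟩⟩
  constructor
  · intro hss
    by_contra hcon
    push Not at hcon
    obtain ⟨h1, h2⟩ := hcon
    apply hss.2
    intro z hz
    obtain ⟨a, ha, -⟩ := (key A z).1 hz 1 one_pos
    have hB0 : B.Nonempty := by
      rw [Set.nonempty_iff_ne_empty]
      intro hb
      rw [h1 hb] at ha
      exact ha
    by_cases hAu : oplus A (Hset zs) = Set.univ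
    · obtain ⟨b, hb⟩ := hB0
      refine subset_closure ⟨z - b, ?_, b, hb, by simp⟩
      intro b' _
      rw [hAu]
      trivial
    · have hBu := h2 ⟨hAu, hAne A ⟨a, ha⟩⟩
      obtain ⟨w, hw⟩ := (Set.ne_univ_iff_exists_notMem _).1 hBu
      rw [key] at hw
      push Not at hw
      obtain ⟨δ, hδ, hw⟩ := hw
      have hbdd : BddAbove (zs '' B) := by
        refine ⟨zs w, ?_⟩
        rintro _ ⟨b, hb, rfl⟩
        have := hw b hb
        linarith
      refine smallNhd _ z e fun t ht => ?_
      obtain ⟨_, ⟨b, hb, rfl⟩, hlt⟩ :=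
        exists_lt_of_lt_csSup (hB0.image zs) (show sSup (zs '' B) - t < sSup (zs '' B) by linarith)
      refine ⟨z - t • e - b, ?_, b, hb, by simp⟩
      intro b' hb'
      have hle := le_csSup hbdd (Set.mem_image_of_mem zs hb')
      rw [key] at hz ⊢
      intro ε hε
      obtain ⟨s, hs, hlt'⟩ := hz ε hε
      refine ⟨s, hs, ?_⟩
      simp only [map_add, map_sub, map_smul, he, smul_eq_mul, mul_one]
      linarith
  · rintro (⟨hB0, hA0⟩ | ⟨⟨hAu, hA0⟩, hBu⟩)
    · have hE : oplus (resid zs A B) B = ∅ := by simp [oplus, hB0]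
      rw [hE]
      exact Set.empty_ssubset.2 (hAne A (Set.nonempty_iff_ne_empty.2 hA0))
    · have hR : resid zs A B = ∅ := by
        rw [Set.eq_empty_iff_forall_notMem]
        intro z hz
        apply hAu
        rw [Set.eq_univ_iff_forall]
        intro w
        rw [key]
        intro ε hε
        have hwz : w - z ∈ oplus B (Hset zs) := by rw [hBu]; trivial
        obtain ⟨b, hb, h1⟩ := (key B _).1 hwz (ε / 2) (by linarith)
        obtain ⟨a, ha, h2⟩ := (key A _).1 (hz b hb) (ε / 2) (by linarith)
        refine ⟨a, ha, ?_⟩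
        simp only [map_add, map_sub] at h1 h2
        linarith
      have hE : oplus (resid zs A B) B = ∅ := by simp [oplus, hR]
      rw [hE]
      exact Set.empty_ssubset.2 (Set.nonempty_iff_ne_empty.2 hA0)
end

section
/- Let A, B ∈ G(Z,C) and z* ∈ C⁻ \ {0}. If H(z*) ⊇ A −_{z*} B, then A ⊆ B ⊕ H(z*). -/
open Set Topology Pointwise

theorem stmt6 {Z : Type*} [AddCommGroup Z] [Module ℝ Z] [TopologicalSpace Z]
    [IsTopologicalAddGroup Z] [ContinuousSMul ℝ Z] [LocallyConvexSpace ℝ Z]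
    (C : Set Z) (hCconv : Convex ℝ C) (hC0 : (0:Z) ∈ C)
    (hCcone : ∀ t : ℝ, 0 < t → t • C ⊆ C) (hclC : closure C ≠ Set.univ)
    (zs : Z →L[ℝ] ℝ) (hzs : ∀ z ∈ C, zs z ≤ 0) (hzs0 : zs ≠ 0)
    (A B : Set Z) (hA : A ∈ Gset C) (hB : B ∈ Gset C)
    (h : resid zs A B ⊆ Hset zs) :
    A ⊆ oplus B (Hset zs) := by
  intro a ha
  obtain ⟨v, hv⟩ : ∃ v, zs v ≠ 0 := by
    by_contra hcon
    push Not at hcon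
    exact hzs0 (ContinuousLinearMap.ext hcon)
  obtain ⟨e, he⟩ : ∃ e, zs e = 1 := ⟨(zs v)⁻¹ • v, by simp [hv]⟩
  by_cases hε : ∃ ε : ℝ, 0 < ε ∧ ∀ b ∈ B, zs b ≤ zs a - ε
  · exfalso
    obtain ⟨ε, hpos, hb⟩ := hε
    have hmem : ε • e ∈ resid zs A B := by
      intro b hbB
      apply subset_closure
      refine Set.mem_add.2 ⟨a, ha, b + ε • e - a, ?_, by abel⟩
      have := hb b hbB
      simp only [Hset, Set.mem_setOf_eq, map_sub, map_add, map_smul, he, smul_eq_mul]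
      linarith
    have := h hmem
    simp only [Hset, Set.mem_setOf_eq, map_smul, he, smul_eq_mul] at this
    linarith
  · push Not at hε
    have hcont : Continuous (fun t : ℝ => a - t • e) := by fun_prop
    have htend : Filter.Tendsto (fun t : ℝ => a - t • e) (𝓝[>] 0) (𝓝 a) := by
      have h1 := hcont.tendsto 0
      simp only [zero_smul, sub_zero] at h1
      exact h1.mono_left nhdsWithin_le_nhds
    refine mem_closure_of_tendsto htend ?_
    filter_upwards [self_mem_nhdsWithin] with t ht
    obtain ⟨b, hbB, hb⟩ := hε t ht
    refine Set.mem_add.2 ⟨b, hbB, a - t • e - b, ?_, by abel⟩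
    simp only [Hset, Set.mem_setOf_eq, map_sub, map_smul, he, smul_eq_mul]
    linarith
end

section
/- Let f : X → G(Z,C) be convex, x₀ ∈ X and z* ∈ C⁻ \ {0}. Then for every x ∈ X, f'_{z*}(x₀, x) = cl co ⋃_{t>0} (1/t)·(f(x₀ + t x) −_{z*} f(x₀)), and the map x ↦ f'_{z*}(x₀, x) is sublinear as a function from X into G(Z, H(z*)), i.e., f'_{z*}(x₀, t x) ⊇ t·f'_{z*}(x₀, x) for all t > 0 and x ∈ X, and f'_{z*}(x₀, x₁ + x₂) ⊇ f'_{z*}(x₀, x₁) ⊕ f'_{z*}(x₀, x₂) for all x₁, x₂ ∈ X. -/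
open Set Topology Pointwise

theorem aux_conv {Z : Type*} [AddCommGroup Z] [Module ℝ Z] [TopologicalSpace Z]
    [IsTopologicalAddGroup Z] [ContinuousSMul ℝ Z]
    {X : Type*} [AddCommGroup X] [Module ℝ X]
    (zs : Z →L[ℝ] ℝ) (f : X → Set Z) (hf : ConvexSV f) (x y : X) (l : ℝ) (h0 : 0 < l) (h1 : l < 1)
    (p q : Z) (hp : p ∈ oplus (f x) (Hset zs)) (hq : q ∈ oplus (f y) (Hset zs)) :
    l • p + (1 - l) • q ∈ oplus (f (l • x + (1 - l) • y)) (Hset zs) := by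
  unfold oplus at *
  refine map_mem_closure₂ (f := fun p q : Z => l • p + (1 - l) • q) (by fun_prop) hp hq ?_
  rintro _ ⟨a, ha, h, hh, rfl⟩ _ ⟨b, hb, k, hk, rfl⟩
  refine ⟨l • a + (1 - l) • b, ?_, l • h + (1 - l) • k, ?_, ?_⟩
  · exact hf x y l h0 h1 (subset_closure
      (Set.add_mem_add (Set.smul_mem_smul_set ha) (Set.smul_mem_smul_set hb)))
  · simp only [Hset, Set.mem_ofPred_eq, map_add, map_smul, smul_eq_mul] at *
    nlinarith
  · simp only [smul_add]; abel

theorem aux_conv2 {Z : Type*} [AddCommGroup Z] [Module ℝ Z] [TopologicalSpace Z]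
    [IsTopologicalAddGroup Z] [ContinuousSMul ℝ Z]
    {X : Type*} [AddCommGroup X] [Module ℝ X]
    (zs : Z →L[ℝ] ℝ) (f : X → Set Z) (hf : ConvexSV f) (x y : X) (l : ℝ) (h0 : 0 < l) (h1 : l < 1)
    (p q : Z) (hp : p ∈ oplus (f x) (Hset zs)) (hq : q ∈ oplus (f y) (Hset zs))
    (w : Z) (u : X) (hw : w = l • p + (1 - l) • q) (hu : u = l • x + (1 - l) • y) :
    w ∈ oplus (f u) (Hset zs) := by
  subst hw hu
  exact aux_conv zs f hf x y l h0 h1 p q hp hq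

theorem aux_sub {Z : Type*} [AddCommGroup Z] [Module ℝ Z] [TopologicalSpace Z]
    (zs : Z →L[ℝ] ℝ) (A : Set Z) : A ⊆ oplus A (Hset zs) := fun a ha =>
  subset_closure ⟨a, ha, 0, by simp [Hset], by simp⟩

/-- The rescaled residuals. -/
def Uset {Z : Type*} [AddCommGroup Z] [Module ℝ Z] [TopologicalSpace Z]
    {X : Type*} [AddCommGroup X] [Module ℝ X]
    (zs : Z →L[ℝ] ℝ) (f : X → Set Z) (x₀ x : X) (t : ℝ) : Set Z :=
  {z | ∀ b ∈ f x₀, b + t • z ∈ oplus (f (x₀ + t • x)) (Hset zs)}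

theorem aux_U {Z : Type*} [AddCommGroup Z] [Module ℝ Z] [TopologicalSpace Z]
    {X : Type*} [AddCommGroup X] [Module ℝ X]
    (zs : Z →L[ℝ] ℝ) (f : X → Set Z) (x₀ x : X) (t : ℝ) (ht : 0 < t) :
    (1 / t) • resid zs (f (x₀ + t • x)) (f x₀) = Uset zs f x₀ x t := by
  ext z
  rw [Set.mem_smul_set_iff_inv_smul_mem₀ (by positivity)]
  simp [resid, Uset]

theorem aux_mono {Z : Type*} [AddCommGroup Z] [Module ℝ Z] [TopologicalSpace Z]
    [IsTopologicalAddGroup Z] [ContinuousSMul ℝ Z]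
    {X : Type*} [AddCommGroup X] [Module ℝ X]
    (zs : Z →L[ℝ] ℝ) (f : X → Set Z) (hf : ConvexSV f) (x₀ x : X) (s t : ℝ) (hs : 0 < s)
    (hst : s ≤ t) : Uset zs f x₀ x t ⊆ Uset zs f x₀ x s := by
  rcases hst.eq_or_lt with rfl | hst
  · exact subset_rfl
  intro z hz b hb
  have ht : 0 < t := hs.trans hst
  refine aux_conv2 zs f hf (x₀ + t • x) x₀ (s / t) (by positivity) ((div_lt_one ht).2 hst)
    _ _ (hz b hb) (aux_sub zs _ hb) _ _ ?_ ?_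
  · have e : s / t * t = s := by field_simp
    rw [smul_add, smul_smul, e, sub_smul, one_smul]; abel
  · have e : s / t * t = s := by field_simp
    rw [smul_add, smul_smul, e, sub_smul, one_smul]; abel

theorem aux_D {Z : Type*} [AddCommGroup Z] [Module ℝ Z] [TopologicalSpace Z]
    [IsTopologicalAddGroup Z] [ContinuousSMul ℝ Z]
    {X : Type*} [AddCommGroup X] [Module ℝ X]
    (zs : Z →L[ℝ] ℝ) (f : X → Set Z) (hf : ConvexSV f) (x₀ x : X) :
    dirDer zs f x₀ x = closure (⋃ t ∈ Set.Ioi (0:ℝ), Uset zs f x₀ x t) := by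
  have h : ∀ s ∈ Set.Ioi (0:ℝ),
      closure (⋃ t ∈ Set.Ioo (0:ℝ) s, (1 / t) • resid zs (f (x₀ + t • x)) (f x₀)) =
      closure (⋃ t ∈ Set.Ioi (0:ℝ), Uset zs f x₀ x t) := by
    intro s hs
    have hs : 0 < s := hs
    congr 1
    apply Set.Subset.antisymm
    · refine Set.iUnion₂_subset fun t ht => ?_
      rw [aux_U zs f x₀ x t ht.1]
      exact Set.subset_biUnion_of_mem (u := fun t => Uset zs f x₀ x t) (show t ∈ Set.Ioi 0 from ht.1)
    · refine Set.iUnion₂_subset fun t ht => ?_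
      have ht : 0 < t := ht
      have hm : 0 < min t (s / 2) := by positivity
      have hm' : min t (s / 2) < s := (min_le_right _ _).trans_lt (by linarith)
      intro z hz
      refine Set.mem_iUnion₂.2 ⟨min t (s / 2), ⟨hm, hm'⟩, ?_⟩
      rw [aux_U zs f x₀ x _ hm]
      exact aux_mono zs f hf x₀ x _ _ hm (min_le_left _ _) hz
  unfold dirDer
  rw [Set.iInter₂_congr h]
  exact Set.biInter_const ⟨1, by simp⟩ _

theorem aux_convU {Z : Type*} [AddCommGroup Z] [Module ℝ Z] [TopologicalSpace Z]
    [IsTopologicalAddGroup Z] [ContinuousSMul ℝ Z]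
    {X : Type*} [AddCommGroup X] [Module ℝ X]
    (zs : Z →L[ℝ] ℝ) (f : X → Set Z) (hf : ConvexSV f) (x₀ x : X) :
    Convex ℝ (⋃ t ∈ Set.Ioi (0:ℝ), Uset zs f x₀ x t) := by
  rw [convex_iff_forall_pos]
  intro p hp q hq a c ha hc hac
  obtain ⟨t, ht, hp⟩ := Set.mem_iUnion₂.1 hp
  obtain ⟨s, hs, hq⟩ := Set.mem_iUnion₂.1 hq
  have ht : 0 < t := ht
  have hs : 0 < s := hs
  have hm : 0 < min t s := lt_min ht hs
  refine Set.mem_iUnion₂.2 ⟨min t s, hm, ?_⟩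
  replace hp := aux_mono zs f hf x₀ x _ _ hm (min_le_left _ _) hp
  replace hq := aux_mono zs f hf x₀ x _ _ hm (min_le_right _ _) hq
  generalize min t s = m at *
  obtain rfl : c = 1 - a := by linarith
  intro b hb
  refine aux_conv2 zs f hf _ _ a ha (by linarith) _ _ (hp b hb) (hq b hb) _ _ ?_ ?_
  · module
  · module

theorem stmt9 {Z : Type*} [AddCommGroup Z] [Module ℝ Z] [TopologicalSpace Z]
    [IsTopologicalAddGroup Z] [ContinuousSMul ℝ Z] [LocallyConvexSpace ℝ Z]
    {X : Type*} [AddCommGroup X] [Module ℝ X] [TopologicalSpace X]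
    [IsTopologicalAddGroup X] [ContinuousSMul ℝ X] [LocallyConvexSpace ℝ X]
    (C : Set Z) (hCconv : Convex ℝ C) (hC0 : (0:Z) ∈ C)
    (hCcone : ∀ t : ℝ, 0 < t → t • C ⊆ C) (hclC : closure C ≠ Set.univ)
    (zs : Z →L[ℝ] ℝ) (hzs : ∀ z ∈ C, zs z ≤ 0) (hzs0 : zs ≠ 0)
    (f : X → Set Z) (hf : ConvexSV f) (hfG : ∀ x : X, f x ∈ Gset C)
    (x₀ : X) :
    (∀ x : X, dirDer zs f x₀ x =
      closure (convexHull ℝ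
        (⋃ t ∈ Set.Ioi (0:ℝ), (1 / t) • resid zs (f (x₀ + t • x)) (f x₀)))) ∧
    (∀ t : ℝ, 0 < t → ∀ x : X, t • dirDer zs f x₀ x ⊆ dirDer zs f x₀ (t • x)) ∧
    (∀ x₁ x₂ : X,
      oplus (dirDer zs f x₀ x₁) (dirDer zs f x₀ x₂) ⊆ dirDer zs f x₀ (x₁ + x₂)) := by
  refine ⟨fun x => ?_, fun t ht x => ?_, fun x₁ x₂ => ?_⟩
  · rw [aux_D zs f hf, show (⋃ t ∈ Set.Ioi (0:ℝ), (1 / t) • resid zs (f (x₀ + t • x)) (f x₀)) = _ from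
      Set.iUnion₂_congr (fun t ht => aux_U zs f x₀ x t ht),
      (aux_convU zs f hf x₀ x).convexHull_eq]
  · rw [aux_D zs f hf, aux_D zs f hf, ← Set.image_smul]
    refine (image_closure_subset_closure_image (continuous_const_smul t)).trans (closure_mono ?_)
    rintro _ ⟨z, hz, rfl⟩
    obtain ⟨s, hs, hz⟩ := Set.mem_iUnion₂.1 hz
    have hs : 0 < s := hs
    refine Set.mem_iUnion₂.2 ⟨s / t, div_pos hs ht, fun b hb => ?_⟩
    have e : s / t * t = s := by field_simp
    simpa only [smul_smul, e] using hz b hb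
  · rw [aux_D zs f hf, aux_D zs f hf, aux_D zs f hf]
    refine closure_minimal ?_ isClosed_closure
    rintro _ ⟨p, hp, q, hq, rfl⟩
    refine map_mem_closure₂ continuous_add hp hq ?_
    clear hp hq p q
    intro p hp q hq
    obtain ⟨t, ht, hp⟩ := Set.mem_iUnion₂.1 hp
    obtain ⟨s, hs, hq⟩ := Set.mem_iUnion₂.1 hq
    have hm : 0 < min t s := lt_min ht hs
    replace hp := aux_mono zs f hf x₀ x₁ _ _ hm (min_le_left _ _) hp
    replace hq := aux_mono zs f hf x₀ x₂ _ _ hm (min_le_right _ _) hq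
    generalize min t s = m at *
    refine Set.mem_iUnion₂.2 ⟨m / 2, half_pos hm, fun b hb => ?_⟩
    refine aux_conv2 zs f hf _ _ (1 / 2) (by norm_num) (by norm_num) _ _ (hp b hb) (hq b hb) _ _ ?_ ?_
    · module
    · module
end

section
/- Let f : X → G(Z,C) be convex, x₀ ∈ dom f and z* ∈ C⁻ \ {0}. Then dom f'_{z*}(x₀, ·) = {x ∈ X : f'_{z*}(x₀, x) ≠ ∅} equals the cone ⋃_{t>0} t·(dom f − x₀). Moreover, f'_{z*}(x₀, 0) = H(z*) if f(x₀) ⊕ H(z*) ∉ {Z, ∅}, and f'_{z*}(x₀, 0) = Z if f(x₀) ⊕ H(z*) ∈ {Z, ∅}. -/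
open Set Topology Pointwise

theorem aux_exists_one {Z : Type*} [AddCommGroup Z] [Module ℝ Z] [TopologicalSpace Z]
    (zs : Z →L[ℝ] ℝ) (hzs0 : zs ≠ 0) : ∃ e : Z, zs e = 1 := by
  obtain ⟨v, hv⟩ : ∃ v, zs v ≠ 0 := by
    by_contra! h
    exact hzs0 (ContinuousLinearMap.ext h)
  exact ⟨(zs v)⁻¹ • v, by simp [hv]⟩

theorem aux_mem_oplus {Z : Type*} [AddCommGroup Z] [Module ℝ Z] [TopologicalSpace Z]
    [IsTopologicalAddGroup Z] (zs : Z →L[ℝ] ℝ) (A : Set Z) (a z : Z) (ha : a ∈ A)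
    (h : zs z ≤ zs a) : z ∈ oplus A (Hset zs) := by
  apply subset_closure
  refine ⟨a, ha, z - a, ?_, by simp⟩
  simp only [Hset, Set.mem_ofPred_eq, map_sub]
  linarith

theorem aux_oplus_bdd {Z : Type*} [AddCommGroup Z] [Module ℝ Z] [TopologicalSpace Z]
    [IsTopologicalAddGroup Z] (zs : Z →L[ℝ] ℝ) (A : Set Z) (M : ℝ)
    (hM : ∀ a ∈ A, zs a ≤ M) (z : Z) (hz : z ∈ oplus A (Hset zs)) : zs z ≤ M := by
  have hcl : IsClosed {w : Z | zs w ≤ M} := isClosed_le zs.continuous continuous_const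
  refine closure_minimal ?_ hcl hz
  rintro _ ⟨a, ha, h, hh, rfl⟩
  have h1 := hM a ha
  have h2 : zs h ≤ 0 := hh
  simp only [Set.mem_ofPred_eq, map_add]
  linarith

theorem stmt10 {Z : Type*} [AddCommGroup Z] [Module ℝ Z] [TopologicalSpace Z]
    [IsTopologicalAddGroup Z] [ContinuousSMul ℝ Z] [LocallyConvexSpace ℝ Z]
    {X : Type*} [AddCommGroup X] [Module ℝ X] [TopologicalSpace X]
    [IsTopologicalAddGroup X] [ContinuousSMul ℝ X] [LocallyConvexSpace ℝ X]
    (C : Set Z) (hCconv : Convex ℝ C) (hC0 : (0:Z) ∈ C)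
    (hCcone : ∀ t : ℝ, 0 < t → t • C ⊆ C) (hclC : closure C ≠ Set.univ)
    (zs : Z →L[ℝ] ℝ) (hzs : ∀ z ∈ C, zs z ≤ 0) (hzs0 : zs ≠ 0)
    (f : X → Set Z) (hf : ConvexSV f) (hfG : ∀ x : X, f x ∈ Gset C)
    (x₀ : X) (hx₀ : f x₀ ≠ ∅) :
    ({x : X | dirDer zs f x₀ x ≠ ∅} =
      ⋃ t ∈ Set.Ioi (0:ℝ), t • ({x : X | f x ≠ ∅} - {x₀})) ∧
    ((oplus (f x₀) (Hset zs) ≠ Set.univ ∧ oplus (f x₀) (Hset zs) ≠ ∅) →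
      dirDer zs f x₀ 0 = Hset zs) ∧
    ((oplus (f x₀) (Hset zs) = Set.univ ∨ oplus (f x₀) (Hset zs) = ∅) →
      dirDer zs f x₀ 0 = Set.univ) := by
  obtain ⟨e, he⟩ := aux_exists_one zs hzs0
  obtain ⟨a₀, ha₀⟩ := Set.nonempty_iff_ne_empty.mpr hx₀
  refine ⟨?_, ?_, ?_⟩
  · ext x
    simp only [Set.mem_ofPred_eq, Set.mem_iUnion, Set.mem_Ioi, exists_prop]
    constructor
    · intro h
      obtain ⟨z, hz⟩ := Set.nonempty_iff_ne_empty.mpr h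
      simp only [dirDer, Set.mem_iInter] at hz
      have h1 := hz 1 (by simp)
      obtain ⟨w, hw⟩ := closure_nonempty_iff.mp ⟨z, h1⟩
      simp only [Set.mem_iUnion] at hw
      obtain ⟨t, ht, v, hv, -⟩ := hw
      obtain ⟨u, hu⟩ := closure_nonempty_iff.mp ⟨_, hv a₀ ha₀⟩
      obtain ⟨p, hp, -⟩ := hu
      have ht0 : 0 < t := ht.1
      refine ⟨t⁻¹, inv_pos.mpr ht0, t • x, ?_, ?_⟩
      · refine ⟨x₀ + t • x, ?_, x₀, rfl, by simp⟩
        exact Set.nonempty_iff_ne_empty.mp ⟨p, hp⟩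
      · simp [smul_smul, ht0.ne']
    · rintro ⟨t, ht, _, ⟨y, hy, w, hw, rfl⟩, rfl⟩
      have hw : w = x₀ := hw
      subst w
      show dirDer zs f x₀ (t • (y - x₀)) ≠ ∅
      obtain ⟨y₀, hy₀⟩ := Set.nonempty_iff_ne_empty.mpr hy
      have key : ∀ s : ℝ, 0 < s → s * t < 1 → ∀ b ∈ f x₀,
          (s * t) • y₀ + (1 - s * t) • b ∈ f (x₀ + s • (t • (y - x₀))) := by
        intro s hs hst b hb
        have h1 := hf y x₀ (s * t) (mul_pos hs ht) hst
        have h2 : (s * t) • y + (1 - s * t) • x₀ = x₀ + s • (t • (y - x₀)) := by module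
        rw [h2] at h1
        exact h1 (subset_closure ⟨_, ⟨y₀, hy₀, rfl⟩, _, ⟨b, hb, rfl⟩, rfl⟩)
      have fin : ∀ z : Z, (∀ s : ℝ, 0 < s → s * t < 1 →
          s • z ∈ resid zs (f (x₀ + s • (t • (y - x₀)))) (f x₀)) →
          dirDer zs f x₀ (t • (y - x₀)) ≠ ∅ := by
        intro z hz
        apply Set.nonempty_iff_ne_empty.mp
        refine ⟨z, ?_⟩
        simp only [dirDer, Set.mem_iInter]
        intro s hs
        have hs : 0 < s := hs
        apply subset_closure
        simp only [Set.mem_iUnion]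
        have hm : 0 < min s t⁻¹ := lt_min hs (inv_pos.mpr ht)
        have h1 : min s t⁻¹ / 2 < s := by linarith [min_le_left s t⁻¹]
        have h2 : min s t⁻¹ / 2 < t⁻¹ := by linarith [min_le_right s t⁻¹]
        refine ⟨min s t⁻¹ / 2, ⟨by linarith, h1⟩, _, hz (min s t⁻¹ / 2) (by linarith) ?_, ?_⟩
        · calc _ < t⁻¹ * t := mul_lt_mul_of_pos_right h2 ht
            _ = 1 := inv_mul_cancel₀ ht.ne'
        · have : min s t⁻¹ / 2 ≠ 0 := by linarith
          simp only [smul_smul]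
          rw [one_div_mul_cancel this, one_smul]
      by_cases hb : ∃ M, ∀ a ∈ f x₀, zs a ≤ M
      · obtain ⟨M, hM⟩ := hb
        refine fin ((t * (zs y₀ - M)) • e) ?_
        intro s hs hst b hb
        refine aux_mem_oplus zs _ _ _ (key s hs hst b hb) ?_
        have := hM b hb
        have h3 : 0 < s * t := mul_pos hs ht
        simp only [map_add, map_smul, smul_eq_mul, he]
        nlinarith
      · push Not at hb
        refine fin 0 ?_
        intro s hs hst b _
        have h3 : 0 < 1 - s * t := by linarith
        obtain ⟨a, ha, hab⟩ := hb ((zs b - s * t * zs y₀) / (1 - s * t))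
        refine aux_mem_oplus zs _ _ _ (key s hs hst a ha) ?_
        rw [div_lt_iff₀ h3] at hab
        simp only [map_add, map_smul, smul_eq_mul, smul_zero, map_zero]
        linarith
  · rintro ⟨hU, -⟩
    have hbdd : ∃ M, ∀ a ∈ f x₀, zs a ≤ M := by
      by_contra hb
      push Not at hb
      apply hU
      refine Set.eq_univ_of_forall fun z => ?_
      obtain ⟨a, ha, hz⟩ := hb (zs z)
      exact aux_mem_oplus zs _ a z ha hz.le
    have hres : resid zs (f x₀) (f x₀) = Hset zs := by
      ext z
      constructor
      · intro hz
        obtain ⟨M, hM⟩ := hbdd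
        have hB : BddAbove (zs '' f x₀) := ⟨M, by rintro _ ⟨a, ha, rfl⟩; exact hM a ha⟩
        have hN : (zs '' f x₀).Nonempty := ⟨_, a₀, ha₀, rfl⟩
        have hle : sSup (zs '' f x₀) ≤ sSup (zs '' f x₀) - zs z := by
          apply csSup_le hN
          rintro _ ⟨b, hb, rfl⟩
          have := aux_oplus_bdd zs (f x₀) (sSup (zs '' f x₀))
            (fun a ha => le_csSup hB ⟨a, ha, rfl⟩) _ (hz b hb)
          rw [map_add] at this
          linarith
        show zs z ≤ 0
        linarith
      · intro hz b hb
        have hz : zs z ≤ 0 := hz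
        refine aux_mem_oplus zs _ b _ hb ?_
        rw [map_add]
        linarith
    have hcl : IsClosed (Hset zs) := isClosed_le zs.continuous continuous_const
    have hsm : ∀ t : ℝ, 0 < t → (1 / t) • Hset zs = Hset zs := by
      intro t ht
      ext z
      rw [Set.mem_smul_set_iff_inv_smul_mem₀ (by positivity)]
      simp only [Hset, Set.mem_ofPred_eq, map_smul, smul_eq_mul, one_div, inv_inv]
      constructor
      · intro h
        by_contra! h'
        nlinarith
      · intro h
        nlinarith
    have hun : ∀ s : ℝ, 0 < s → (⋃ t ∈ Set.Ioo (0:ℝ) s, (1 / t) • Hset zs) = Hset zs := by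
      intro s hs
      apply Set.Subset.antisymm
      · exact Set.iUnion₂_subset fun t ht => (hsm t ht.1).subset
      · intro z hz
        simp only [Set.mem_iUnion]
        exact ⟨s / 2, ⟨by linarith, by linarith⟩, (hsm (s/2) (by linarith)).symm ▸ hz⟩
    simp only [dirDer, smul_zero, add_zero, hres]
    ext z
    simp only [Set.mem_iInter]
    constructor
    · intro h
      have := h 1 (by simp)
      rwa [hun 1 one_pos, hcl.closure_eq] at this
    · intro h s hs
      rw [hun s hs]
      exact subset_closure h
  · rintro (hU | hE)
    · refine Set.eq_univ_of_forall fun z => ?_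
      simp only [dirDer, smul_zero, add_zero, Set.mem_iInter]
      intro s hs
      have hs : 0 < s := hs
      apply subset_closure
      simp only [Set.mem_iUnion]
      refine ⟨s / 2, ⟨by linarith, by linarith⟩, (s / 2) • z, ?_, ?_⟩
      · intro b _
        rw [hU]
        trivial
      · have : s / 2 ≠ 0 := by linarith
        simp only [smul_smul]
        rw [one_div_mul_cancel this, one_smul]
    · exfalso
      have := aux_mem_oplus zs (f x₀) a₀ a₀ ha₀ le_rfl
      rw [hE] at this
      exact this
end

section
/- Let f : X → G(Z,C) be convex and x₀ ∈ core(dom f), i.e., for every x ∈ X there is t₀ > 0 with x₀ + t x ∈ dom f for all t ∈ [0, t₀]. If f is proper (dom f ≠ ∅ and f(x) ≠ Z for all x ∈ X), then there exists z* ∈ C⁻ \ {0} such that f'_{z*}(x₀, x) ∉ {Z, ∅} for all x ∈ X. If f is C-proper ((f(x) − C) \ f(x) ≠ ∅ for all x ∈ dom f, where f(x) − C is the elementwise Minkowski difference set {z − c : z ∈ f(x), c ∈ C}), then such a z* can be chosen in C⁻ \ (−C⁻). -/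
open Set Topology Pointwise

theorem stmt11_der {Z : Type*} [AddCommGroup Z] [Module ℝ Z] [TopologicalSpace Z]
    {X : Type*} [AddCommGroup X] [Module ℝ X]
    (f : X → Set Z) (hf : ConvexSV f) (x₀ : X)
    (hcore : ∀ x : X, ∃ t₀ > (0:ℝ), ∀ t : ℝ, 0 ≤ t → t ≤ t₀ → f (x₀ + t • x) ≠ ∅)
    (zs : Z →L[ℝ] ℝ) (hz : zs ≠ 0) (S : ℝ) (hS : IsLUB (zs '' f x₀) S) (x : X) :
    dirDer zs f x₀ x ≠ Set.univ ∧ dirDer zs f x₀ x ≠ ∅ := by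
  have hc : ∀ x₁ x₂ : X, ∀ t : ℝ, 0 < t → t < 1 → ∀ a ∈ f x₁, ∀ b ∈ f x₂,
      t • a + (1 - t) • b ∈ f (t • x₁ + (1 - t) • x₂) := by
    intro x₁ x₂ t h0 h1 a ha b hb
    exact hf x₁ x₂ t h0 h1 (subset_closure
      (Set.add_mem_add (Set.smul_mem_smul_set ha) (Set.smul_mem_smul_set hb)))
  have hub : ∀ b ∈ f x₀, zs b ≤ S := fun b hb => hS.1 ⟨b, hb, rfl⟩
  have hsurj : ∀ r : ℝ, ∃ w, zs w = r := by
    intro r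
    obtain ⟨v, hv⟩ : ∃ v, zs v ≠ 0 := by
      by_contra! h
      exact hz (ContinuousLinearMap.ext h)
    refine ⟨(r / zs v) • v, ?_⟩
    rw [map_smul, smul_eq_mul]
    field_simp
  constructor
  · obtain ⟨r, hr, hne⟩ := hcore (-x)
    obtain ⟨y, hy⟩ := Set.nonempty_iff_ne_empty.2 (hne r hr.le le_rfl)
    obtain ⟨w, hw⟩ := hsurj ((S - zs y) / r + 1)
    intro h
    have hmem : w ∈ dirDer zs f x₀ x := h ▸ Set.mem_univ w
    have h1 := Set.mem_iInter₂.1 hmem 1 (by simp)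
    have hcl : IsClosed {v : Z | zs v ≤ (S - zs y) / r} :=
      isClosed_le zs.continuous continuous_const
    have h2 := closure_minimal (t := {v : Z | zs v ≤ (S - zs y) / r}) ?_ hcl h1
    · have : zs w ≤ (S - zs y) / r := h2
      linarith
    intro v hv
    obtain ⟨t, ht, hv⟩ := Set.mem_iUnion₂.1 hv
    obtain ⟨z, hzr, rfl⟩ := hv
    have ht0 : 0 < t := ht.1
    have hA : ∀ a ∈ f (x₀ + t • x), zs a ≤ S + t * ((S - zs y) / r) := by
      intro a ha
      have h3 := hc _ _ (r / (r + t)) (by positivity)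
        (by rw [div_lt_one (by positivity)]; linarith) a ha y hy
      have e : (r / (r + t)) • (x₀ + t • x) + (1 - r / (r + t)) • (x₀ + r • -x) = x₀ := by
        have : (1 - r / (r + t)) = t / (r + t) := by field_simp; ring
        rw [this]
        match_scalars <;> field_simp <;> ring
      rw [e] at h3
      have h4 := hub _ h3
      rw [map_add, map_smul, map_smul, smul_eq_mul, smul_eq_mul] at h4
      have e2 : r / (r + t) * zs a + (1 - r / (r + t)) * zs y
          = (r * zs a + t * zs y) / (r + t) := by field_simp; ring
      rw [e2, div_le_iff₀ (by positivity)] at h4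
      have e3 : S + t * ((S - zs y) / r) = (S * r + t * (S - zs y)) / r := by field_simp
      rw [e3, le_div_iff₀ hr]
      linarith
    have hO : oplus (f (x₀ + t • x)) (Hset zs) ⊆ {v | zs v ≤ S + t * ((S - zs y) / r)} := by
      apply closure_minimal _ (isClosed_le zs.continuous continuous_const)
      rintro _ ⟨a, ha, h, hh, rfl⟩
      have := hA a ha
      have hh' : zs h ≤ 0 := hh
      change zs (a + h) ≤ _
      rw [map_add]
      linarith
    have hS' : S ≤ S + t * ((S - zs y) / r) - zs z := by
      apply hS.2
      rintro _ ⟨b, hb, rfl⟩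
      have : zs (b + z) ≤ S + t * ((S - zs y) / r) := hO (hzr b hb)
      rw [map_add] at this
      linarith
    have : zs ((1 / t) • z) ≤ (S - zs y) / r := by
      rw [map_smul, smul_eq_mul, one_div, inv_mul_le_iff₀ ht0]
      linarith
    exact this
  · obtain ⟨r, hr, hne⟩ := hcore x
    obtain ⟨y, hy⟩ := Set.nonempty_iff_ne_empty.2 (hne r hr.le le_rfl)
    obtain ⟨w, hw⟩ := hsurj ((zs y - S) / r)
    apply Set.nonempty_iff_ne_empty.1
    refine ⟨w, Set.mem_iInter₂.2 fun s hs => subset_closure ?_⟩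
    have hs : 0 < s := hs
    obtain ⟨t, ht0, htm⟩ := exists_between (lt_min hs hr)
    obtain ⟨hts, htr⟩ := lt_min_iff.1 htm
    refine Set.mem_iUnion₂.2 ⟨t, ⟨ht0, hts⟩, t • w, ?_, ?_⟩
    · intro b hb
      apply subset_closure
      have h3 := hc _ _ (t / r) (by positivity) (by rwa [div_lt_one hr]) y hy b hb
      have e : (t / r) • (x₀ + r • x) + (1 - t / r) • x₀ = x₀ + t • x := by
        match_scalars <;> field_simp <;> ring
      rw [e] at h3
      refine ⟨_, h3, b + t • w - ((t / r) • y + (1 - t / r) • b), ?_, add_sub_cancel _ _⟩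
      change zs _ ≤ 0
      simp only [map_add, map_sub, map_smul, smul_eq_mul, hw]
      have := hub b hb
      have e2 : zs b + t * ((zs y - S) / r) - (t / r * zs y + (1 - t / r) * zs b)
          = t / r * (zs b - S) := by field_simp; ring
      rw [e2]
      exact mul_nonpos_of_nonneg_of_nonpos (by positivity) (by linarith)
    · change (1 / t) • t • w = w
      rw [smul_smul, one_div, inv_mul_cancel₀ ht0.ne', one_smul]

theorem stmt11 {Z : Type*} [AddCommGroup Z] [Module ℝ Z] [TopologicalSpace Z]
    [IsTopologicalAddGroup Z] [ContinuousSMul ℝ Z] [LocallyConvexSpace ℝ Z]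
    {X : Type*} [AddCommGroup X] [Module ℝ X] [TopologicalSpace X]
    [IsTopologicalAddGroup X] [ContinuousSMul ℝ X] [LocallyConvexSpace ℝ X]
    (C : Set Z) (hCconv : Convex ℝ C) (hC0 : (0:Z) ∈ C)
    (hCcone : ∀ t : ℝ, 0 < t → t • C ⊆ C) (hclC : closure C ≠ Set.univ)
    (f : X → Set Z) (hf : ConvexSV f) (hfG : ∀ x : X, f x ∈ Gset C)
    (x₀ : X)
    (hcore : ∀ x : X, ∃ t₀ > (0:ℝ), ∀ t : ℝ, 0 ≤ t → t ≤ t₀ → f (x₀ + t • x) ≠ ∅) :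
    (((∃ x : X, f x ≠ ∅) ∧ (∀ x : X, f x ≠ Set.univ)) →
      ∃ zs : Z →L[ℝ] ℝ, (∀ z ∈ C, zs z ≤ 0) ∧ zs ≠ 0 ∧
        ∀ x : X, dirDer zs f x₀ x ≠ Set.univ ∧ dirDer zs f x₀ x ≠ ∅) ∧
    ((∀ x : X, f x ≠ ∅ → ((f x - C) \ f x).Nonempty) →
      ∃ zs : Z →L[ℝ] ℝ, (∀ z ∈ C, zs z ≤ 0) ∧ ¬(∀ z ∈ C, 0 ≤ zs z) ∧
        ∀ x : X, dirDer zs f x₀ x ≠ Set.univ ∧ dirDer zs f x₀ x ≠ ∅) := by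
  have h0 : f x₀ ≠ ∅ := by
    obtain ⟨t, ht, h⟩ := hcore 0
    simpa using h 0 le_rfl ht.le
  obtain ⟨a₀, ha₀⟩ := Set.nonempty_iff_ne_empty.2 h0
  have hG : f x₀ = closure (convexHull ℝ (f x₀ + C)) := hfG x₀
  have hcl : IsClosed (f x₀) := by rw [hG]; exact isClosed_closure
  have hcv : Convex ℝ (f x₀) := by rw [hG]; exact (convex_convexHull ℝ _).closure
  have hadd : ∀ a ∈ f x₀, ∀ c ∈ C, a + c ∈ f x₀ := by
    intro a ha c hc
    rw [hG]
    exact subset_closure (subset_convexHull ℝ _ (Set.add_mem_add ha hc))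
  have key : ∀ z₁, z₁ ∉ f x₀ → ∃ zs : Z →L[ℝ] ℝ, (∀ z ∈ C, zs z ≤ 0) ∧ zs ≠ 0 ∧
      (∀ a ∈ f x₀, zs a < zs z₁) ∧
      ∀ x : X, dirDer zs f x₀ x ≠ Set.univ ∧ dirDer zs f x₀ x ≠ ∅ := by
    intro z₁ hz₁
    obtain ⟨zs, u, hu, hu1⟩ := geometric_hahn_banach_closed_point hcv hcl hz₁
    have hne : zs ≠ 0 := by
      rintro rfl
      have := hu a₀ ha₀
      simp at this hu1
      linarith
    refine ⟨zs, ?_, hne, fun a ha => (hu a ha).trans hu1, ?_⟩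
    · intro c hc
      by_contra! h
      have hp : 0 < (u - zs a₀) / zs c := div_pos (by linarith [hu a₀ ha₀]) h
      have h2 := hu _ (hadd a₀ ha₀ _ (hCcone _ hp (Set.smul_mem_smul_set hc)))
      rw [map_add, map_smul, smul_eq_mul, div_mul_cancel₀ _ h.ne'] at h2
      linarith
    · apply stmt11_der f hf x₀ hcore zs hne (sSup (zs '' f x₀))
      refine isLUB_csSup ⟨_, a₀, ha₀, rfl⟩ ⟨u, ?_⟩
      rintro _ ⟨a, ha, rfl⟩
      exact (hu a ha).le
  constructor
  · rintro ⟨-, hp⟩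
    obtain ⟨z₁, hz₁⟩ := (Set.ne_univ_iff_exists_notMem _).1 (hp x₀)
    obtain ⟨zs, h1, h2, -, h3⟩ := key z₁ hz₁
    exact ⟨zs, h1, h2, h3⟩
  · intro hp
    obtain ⟨z₁, ⟨a, ha, c, hc, rfl⟩, hz₁⟩ := hp x₀ h0
    obtain ⟨zs, h1, -, h2, h3⟩ := key _ hz₁
    refine ⟨zs, h1, fun h => ?_, h3⟩
    have h4 := h2 a ha
    have h5 := h c hc
    simp only [map_sub] at h4
    linarith
end

section
/- Let f : X → G(Z,C) be convex, x₀ ∈ X, x* ∈ X* and z* ∈ C⁻ \ {0}. Then the following are equivalent: (a) S_{(x*,z*)}(x) ⊇ f'_{z*}(x₀, x) for all x ∈ X; (b) S_{(x*,z*)}(x − x₀) ⊇ f(x) −_{z*} f(x₀) for all x ∈ X. -/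
open Set Topology Pointwise

theorem stmt12 {Z : Type*} [AddCommGroup Z] [Module ℝ Z] [TopologicalSpace Z]
    [IsTopologicalAddGroup Z] [ContinuousSMul ℝ Z] [LocallyConvexSpace ℝ Z]
    {X : Type*} [AddCommGroup X] [Module ℝ X] [TopologicalSpace X]
    [IsTopologicalAddGroup X] [ContinuousSMul ℝ X] [LocallyConvexSpace ℝ X]
    (C : Set Z) (hCconv : Convex ℝ C) (hC0 : (0:Z) ∈ C)
    (hCcone : ∀ t : ℝ, 0 < t → t • C ⊆ C) (hclC : closure C ≠ Set.univ)
    (zs : Z →L[ℝ] ℝ) (hzs : ∀ z ∈ C, zs z ≤ 0) (hzs0 : zs ≠ 0)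
    (f : X → Set Z) (hf : ConvexSV f) (hfG : ∀ x : X, f x ∈ Gset C)
    (x₀ : X) (xs : X →L[ℝ] ℝ) :
    (∀ x : X, dirDer zs f x₀ x ⊆ Sfun xs zs x) ↔
      (∀ x : X, resid zs (f x) (f x₀) ⊆ Sfun xs zs (x - x₀)) := by
  constructor
  · intro ha x z hz
    apply ha (x - x₀)
    simp only [dirDer, mem_iInter]
    intro s hs
    have hs0 : 0 < s := hs
    apply subset_closure
    have hm : 0 < min s 1 := lt_min hs0 one_pos
    have h1 : min s 1 ≤ s := min_le_left _ _
    have h2 : min s 1 ≤ 1 := min_le_right _ _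
    obtain ⟨t, ht⟩ : ∃ t, t = min s 1 / 2 := ⟨_, rfl⟩
    have ht0 : 0 < t := by linarith
    have hts : t < s := by linarith
    have ht1 : t < 1 := by linarith
    simp only [mem_iUnion]
    refine ⟨t, ⟨ht0, hts⟩, t • z, ?_, ?_⟩
    · intro b hb
      have hbz := hz b hb
      have hcont : Continuous (fun y : Z => t • y + (1 - t) • b) := by fun_prop
      have key := map_mem_closure (t := f (x₀ + t • (x - x₀)) + Hset zs) hcont hbz ?_
      · have e : b + t • z = t • (b + z) + (1 - t) • b := by module
        rw [e]
        exact key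
      · rintro y ⟨a, haf, h, hh, rfl⟩
        refine ⟨t • a + (1 - t) • b, ?_, t • h, ?_, ?_⟩
        · have e : x₀ + t • (x - x₀) = t • x + (1 - t) • x₀ := by module
          rw [e]
          exact hf x x₀ t ht0 ht1 (subset_closure
            (add_mem_add (smul_mem_smul_set haf) (smul_mem_smul_set hb)))
        · have hh' : zs h ≤ 0 := hh
          show zs (t • h) ≤ 0
          rw [map_smul, smul_eq_mul]
          exact mul_nonpos_of_nonneg_of_nonpos ht0.le hh'
        · show t • a + (1 - t) • b + t • h = t • (a + h) + (1 - t) • b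
          module
    · show (1 / t) • t • z = z
      rw [smul_smul, one_div, inv_mul_cancel₀ ht0.ne', one_smul]
  · intro hb x z hz
    simp only [dirDer, mem_iInter] at hz
    have h1 := hz 1 (show (0:ℝ) < 1 from one_pos)
    have hcl : IsClosed (Sfun xs zs x) :=
      isClosed_le (by fun_prop) continuous_const
    refine closure_minimal ?_ hcl h1
    intro y hy
    simp only [mem_iUnion] at hy
    obtain ⟨t, ⟨ht0, _⟩, w, hw, rfl⟩ := hy
    have h2 : xs (x₀ + t • x - x₀) + zs w ≤ 0 := hb _ hw
    rw [add_sub_cancel_left, map_smul, smul_eq_mul] at h2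
    show xs x + zs ((1 / t) • w) ≤ 0
    rw [map_smul, smul_eq_mul]
    have e : xs x + 1 / t * zs w = (1 / t) * (t * xs x + zs w) := by
      field_simp
    rw [e]
    exact mul_nonpos_of_nonneg_of_nonpos (by positivity) h2
end

section
/- Let f : X → G(Z,C) be convex, x₀ ∈ X, x* ∈ X* and z* ∈ C⁻ \ {0}, and assume additionally that dom f ≠ ∅ and f(x₀) ⊕ H(z*) ≠ Z. Then the following are equivalent: (b) S_{(x*,z*)}(x − x₀) ⊇ f(x) −_{z*} f(x₀) for all x ∈ X; (c) f(x₀) ⊕ S_{(x*,z*)}(−x₀) ⊇ f(x) ⊕ S_{(x*,z*)}(−x) for all x ∈ X; (d) S_{(x*,z*)}(x) −_{z*} f(x) ⊇ S_{(x*,z*)}(x₀) −_{z*} f(x₀) for all x ∈ X. -/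
open Set Topology Pointwise

theorem aux_mem_s13 {Z : Type*} [AddCommGroup Z] [Module ℝ Z] [TopologicalSpace Z]
    [IsTopologicalAddGroup Z] [ContinuousSMul ℝ Z] (zs : Z →L[ℝ] ℝ) (e : Z) (he : zs e = 1)
    (A : Set Z) (c : ℝ) (z : Z) :
    z ∈ closure (A + {w : Z | zs w ≤ c}) ↔ ∀ ε : ℝ, 0 < ε → ∃ a ∈ A, zs z < zs a + c + ε := by
  constructor
  · intro h ε hε
    rw [mem_closure_iff] at h
    obtain ⟨w, hw1, hw2⟩ := h {w | zs z - ε < zs w}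
      (isOpen_lt continuous_const zs.continuous) (by simpa using hε)
    obtain ⟨a, ha, b, hb, rfl⟩ := Set.mem_add.1 hw2
    refine ⟨a, ha, ?_⟩
    simp only [Set.mem_ofPred_eq, map_add] at hw1 hb
    linarith
  · intro h
    have ht : Filter.Tendsto (fun ε : ℝ => z - ε • e) (𝓝[>] (0:ℝ)) (𝓝 z) := by
      have hc : Continuous (fun ε : ℝ => z - ε • e) := by fun_prop
      have := hc.tendsto 0
      simp only [zero_smul, sub_zero] at this
      exact this.mono_left nhdsWithin_le_nhds
    refine mem_closure_of_tendsto ht ?_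
    filter_upwards [self_mem_nhdsWithin] with ε hε
    obtain ⟨a, ha, h1⟩ := h ε hε
    refine Set.mem_add.2 ⟨a, ha, z - ε • e - a, ?_, by abel⟩
    simp only [Set.mem_ofPred_eq, map_sub, map_smul, he, smul_eq_mul]
    linarith

theorem stmt13 {Z : Type*} [AddCommGroup Z] [Module ℝ Z] [TopologicalSpace Z]
    [IsTopologicalAddGroup Z] [ContinuousSMul ℝ Z] [LocallyConvexSpace ℝ Z]
    {X : Type*} [AddCommGroup X] [Module ℝ X] [TopologicalSpace X]
    [IsTopologicalAddGroup X] [ContinuousSMul ℝ X] [LocallyConvexSpace ℝ X]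
    (C : Set Z) (hCconv : Convex ℝ C) (hC0 : (0:Z) ∈ C)
    (hCcone : ∀ t : ℝ, 0 < t → t • C ⊆ C) (hclC : closure C ≠ Set.univ)
    (zs : Z →L[ℝ] ℝ) (hzs : ∀ z ∈ C, zs z ≤ 0) (hzs0 : zs ≠ 0)
    (f : X → Set Z) (hf : ConvexSV f) (hfG : ∀ x : X, f x ∈ Gset C)
    (x₀ : X) (xs : X →L[ℝ] ℝ)
    (hdom : ∃ x : X, f x ≠ ∅) (hx₀H : oplus (f x₀) (Hset zs) ≠ Set.univ) :
    ((∀ x : X, resid zs (f x) (f x₀) ⊆ Sfun xs zs (x - x₀)) ↔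
      (∀ x : X, oplus (f x) (Sfun xs zs (-x)) ⊆ oplus (f x₀) (Sfun xs zs (-x₀)))) ∧
    ((∀ x : X, resid zs (f x) (f x₀) ⊆ Sfun xs zs (x - x₀)) ↔
      (∀ x : X, resid zs (Sfun xs zs x₀) (f x₀) ⊆ resid zs (Sfun xs zs x) (f x))) := by
  obtain ⟨e, he⟩ : ∃ e, zs e = 1 := by
    obtain ⟨v, hv⟩ : ∃ v, zs v ≠ 0 := by
      by_contra! h
      exact hzs0 (ContinuousLinearMap.ext h)
    exact ⟨(zs v)⁻¹ • v, by simp [hv]⟩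
  have hH : ∀ (A : Set Z) (z : Z), z ∈ oplus A (Hset zs) ↔
      ∀ ε : ℝ, 0 < ε → ∃ a ∈ A, zs z < zs a + ε := by
    intro A z
    have := aux_mem_s13 zs e he A 0 z
    simpa only [oplus, Hset, add_zero] using this
  have hS : ∀ (A : Set Z) (x : X) (z : Z), z ∈ oplus A (Sfun xs zs x) ↔
      ∀ ε : ℝ, 0 < ε → ∃ a ∈ A, zs z < zs a - xs x + ε := by
    intro A x z
    have := aux_mem_s13 zs e he A (-xs x) z
    have h2 : Sfun xs zs x = {w : Z | zs w ≤ -xs x} := by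
      ext w
      simp only [Sfun, Set.mem_ofPred_eq]
      constructor <;> intro h <;> linarith
    rw [h2]
    simpa only [oplus, ← sub_eq_add_neg] using this
  have hSH : ∀ (x : X) (z : Z), z ∈ oplus (Sfun xs zs x) (Hset zs) ↔ xs x + zs z ≤ 0 := by
    intro x z
    rw [hH]
    constructor
    · intro h
      refine le_of_forall_pos_le_add fun ε hε => ?_
      obtain ⟨a, ha, h1⟩ := h ε hε
      simp only [Sfun, Set.mem_ofPred_eq] at ha
      linarith
    · intro h ε hε
      exact ⟨z, h, by linarith⟩
  rcases Set.eq_empty_or_nonempty (f x₀) with h0 | h0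
  · obtain ⟨x, hx⟩ := hdom
    obtain ⟨b, hb⟩ := Set.nonempty_iff_ne_empty.2 hx
    have hb' : ¬ (∀ x : X, resid zs (f x) (f x₀) ⊆ Sfun xs zs (x - x₀)) := by
      intro h
      have := @h x₀ e (by simp [resid, h0])
      simp only [Sfun, Set.mem_ofPred_eq, sub_self, map_zero, he] at this
      linarith
    refine ⟨iff_of_false hb' ?_, iff_of_false hb' ?_⟩
    · intro h
      have h1 := @h x (b + (xs x) • e) ((hS _ _ _).2 fun ε hε => ⟨b, hb, by simp [he]; linarith⟩)
      obtain ⟨a, ha, -⟩ := (hS _ _ _).1 h1 1 one_pos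
      simp [h0] at ha
    · intro h
      have h1 := @h x ((1 - zs b - xs x) • e) (by simp [resid, h0]) b hb
      rw [hSH] at h1
      simp only [map_add, map_smul, he, smul_eq_mul] at h1
      linarith
  have hbdd : BddAbove (zs '' f x₀) := by
    obtain ⟨z, hz⟩ := (Set.ne_univ_iff_exists_notMem _).1 hx₀H
    rw [hH] at hz
    push Not at hz
    obtain ⟨ε, hε, h⟩ := hz
    refine ⟨zs z, ?_⟩
    rintro _ ⟨a, ha, rfl⟩
    have := h a ha
    linarith
  obtain ⟨σ, hσ⟩ : ∃ σ, IsLUB (zs '' f x₀) σ := ⟨_, isLUB_csSup (h0.image _) hbdd⟩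
  have hle : ∀ a ∈ f x₀, zs a ≤ σ := fun a ha => hσ.1 ⟨a, ha, rfl⟩
  have hap : ∀ ε : ℝ, 0 < ε → ∃ a ∈ f x₀, σ - ε < zs a := by
    intro ε hε
    obtain ⟨_, ⟨a, ha, rfl⟩, h1, -⟩ := hσ.exists_between (sub_lt_self σ hε)
    exact ⟨a, ha, h1⟩
  have hb : (∀ x : X, resid zs (f x) (f x₀) ⊆ Sfun xs zs (x - x₀)) ↔
      ∀ x, ∀ b ∈ f x, zs b + xs x ≤ σ + xs x₀ := by
    constructor
    · intro h x b hb
      have h1 := @h x ((zs b - σ) • e) (by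
        intro b' hb'
        rw [hH]
        intro ε hε
        refine ⟨b, hb, ?_⟩
        have := hle b' hb'
        simp only [map_add, map_smul, he, smul_eq_mul]
        linarith)
      simp only [Sfun, Set.mem_ofPred_eq, map_sub, map_smul, he, smul_eq_mul] at h1
      linarith
    · intro h x z hz
      simp only [Sfun, Set.mem_ofPred_eq, map_sub]
      refine le_of_forall_pos_le_add fun ε hε => ?_
      obtain ⟨b', hb', h1⟩ := hap (ε / 2) (by linarith)
      obtain ⟨a, ha, h2⟩ := (hH _ _).1 (hz b' hb') (ε / 2) (by linarith)
      have := h x a ha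
      simp only [map_add] at h2
      linarith
  rw [hb]
  constructor
  · constructor
    · intro h x z hz
      rw [hS] at hz ⊢
      intro ε hε
      obtain ⟨a, ha, h1⟩ := hz (ε / 2) (by linarith)
      obtain ⟨b', hb', h2⟩ := hap (ε / 2) (by linarith)
      have := h x a ha
      refine ⟨b', hb', ?_⟩
      simp only [map_neg] at h1 ⊢
      linarith
    · intro h x b hb
      have h1 := @h x (b + (xs x) • e) ((hS _ _ _).2 fun ε hε => ⟨b, hb, by simp [he]; linarith⟩)
      refine le_of_forall_pos_le_add fun ε hε => ?_
      obtain ⟨a, ha, h2⟩ := (hS _ _ _).1 h1 ε hε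
      have := hle a ha
      simp only [map_add, map_smul, he, smul_eq_mul, map_neg] at h2
      linarith
  · constructor
    · intro h x z hz b hb
      rw [hSH]
      have := h x b hb
      refine le_of_forall_pos_le_add fun ε hε => ?_
      obtain ⟨b', hb', h2⟩ := hap ε hε
      have h3 := (hSH _ _).1 (hz b' hb')
      simp only [map_add] at h3 ⊢
      linarith
    · intro h x b hb
      have h1 := @h x ((-xs x₀ - σ) • e) (by
        intro b' hb'
        rw [hSH]
        have := hle b' hb'
        simp only [map_add, map_smul, he, smul_eq_mul]
        linarith) b hb
      rw [hSH] at h1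
      simp only [map_add, map_smul, he, smul_eq_mul] at h1
      linarith
end

section
/- Let f : X → G(Z,C) be convex, x₀ ∈ dom f and z* ∈ C⁻ \ {0} such that the function x ↦ f(x) ⊕ H(z*) is proper (it has nonempty domain and never takes the value Z) and the scalarization φ_{f,z*} is upper semicontinuous at x₀. Then ∂_{z*} f(x₀) ≠ ∅, for every x ∈ X one has f'_{z*}(x₀, x) = ⋂_{x* ∈ ∂_{z*} f(x₀)} S_{(x*,z*)}(x), and for every x ∈ X there exists x₀* ∈ ∂_{z*} f(x₀) with f'_{z*}(x₀, x) = S_{(x₀*,z*)}(x). -/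
open Set Topology Pointwise

/-- Slopes. -/
def slopeSet {X : Type*} [AddCommGroup X] [Module ℝ X] (D : Set X) (h : X → ℝ) (x : X) : Set ℝ :=
  {r | ∃ t : ℝ, 0 < t ∧ t • x ∈ D ∧ r = h (t • x) / t}

theorem slope_mono {X : Type*} [AddCommGroup X] [Module ℝ X] {D : Set X} {h : X → ℝ}
    (hc : ConvexOn ℝ D h) (h00 : (0:X) ∈ D) (h0 : h 0 = 0) {x : X} {t t' : ℝ} (ht' : 0 < t')
    (htt : t' ≤ t) (hx : t • x ∈ D) : t' • x ∈ D ∧ h (t' • x) / t' ≤ h (t • x) / t := by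
  have ht : 0 < t := ht'.trans_le htt
  have e : (t'/t) • (t • x) + (1 - t'/t) • (0:X) = t' • x := by
    rw [smul_zero, add_zero, smul_smul]; congr 1; field_simp
  have a1 : 0 ≤ t'/t := by positivity
  have a2 : 0 ≤ 1 - t'/t := by
    have : t'/t ≤ 1 := (div_le_one ht).2 htt
    linarith
  have b1 := hc.1 hx h00 a1 a2 (by ring)
  have b2 := hc.2 hx h00 a1 a2 (by ring)
  rw [e] at b1 b2
  refine ⟨b1, ?_⟩
  rw [h0, smul_zero, add_zero, smul_eq_mul] at b2
  rw [div_le_iff₀ ht']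
  calc _ ≤ _ := b2
    _ = _ := by field_simp

theorem ev_mem {X : Type*} [AddCommGroup X] [Module ℝ X] [TopologicalSpace X]
    [ContinuousSMul ℝ X] {D : Set X} (hD : D ∈ 𝓝 (0:X)) (x : X) :
    ∃ s : ℝ, 0 < s ∧ s • x ∈ D := by
  have : Filter.Tendsto (fun s : ℝ => s • x) (𝓝[>] 0) (𝓝 0) := by
    have : Continuous (fun s : ℝ => s • x) := by fun_prop
    have := this.tendsto 0
    rw [zero_smul] at this
    exact this.mono_left nhdsWithin_le_nhds
  have h2 := (this.eventually hD).and self_mem_nhdsWithin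
  obtain ⟨s, hs, hs'⟩ := h2.exists
  exact ⟨s, hs', hs⟩

theorem slope_bdd {X : Type*} [AddCommGroup X] [Module ℝ X] [TopologicalSpace X]
    [ContinuousSMul ℝ X] {D : Set X} {h : X → ℝ} (hD : D ∈ 𝓝 (0:X))
    (hc : ConvexOn ℝ D h) (h0 : h 0 = 0) (x : X) : BddBelow (slopeSet D h x) := by
  obtain ⟨s, hs, hsx⟩ := ev_mem hD (-x)
  refine ⟨- h (s • -x) / s, ?_⟩
  rintro r ⟨t, ht, htx, rfl⟩
  have e : (s/(s+t)) • (t • x) + (t/(s+t)) • (s • -x) = 0 := by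
    rw [smul_smul, smul_smul, smul_neg, ← sub_eq_add_neg, ← sub_smul]
    convert zero_smul ℝ x using 2
    ring
  have b2 := hc.2 htx hsx (by positivity : 0 ≤ s/(s+t)) (by positivity : 0 ≤ t/(s+t)) (by field_simp)
  rw [e, h0, smul_eq_mul, smul_eq_mul] at b2
  rw [div_le_div_iff₀ hs ht]
  have : 0 ≤ (s/(s+t) * h (t • x) + t/(s+t) * h (s • -x)) * (s+t) := by positivity
  have e3 : (s/(s+t) * h (t • x) + t/(s+t) * h (s • -x)) * (s+t) = s * h (t • x) + t * h (s • -x) := by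
    field_simp
  rw [e3] at this
  linarith

theorem slope_ne {X : Type*} [AddCommGroup X] [Module ℝ X] [TopologicalSpace X]
    [ContinuousSMul ℝ X] {D : Set X} (h : X → ℝ) (hD : D ∈ 𝓝 (0:X))
    (x : X) : (slopeSet D h x).Nonempty := by
  obtain ⟨s, hs, hsx⟩ := ev_mem hD x
  exact ⟨_, s, hs, hsx, rfl⟩

theorem slope_add {X : Type*} [AddCommGroup X] [Module ℝ X] [TopologicalSpace X]
    [ContinuousSMul ℝ X] {D : Set X} {h : X → ℝ} (hD : D ∈ 𝓝 (0:X))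
    (hc : ConvexOn ℝ D h) (h0 : h 0 = 0) (x y : X) :
    sInf (slopeSet D h (x + y)) ≤ sInf (slopeSet D h x) + sInf (slopeSet D h y) := by
  have key : ∀ a ∈ slopeSet D h x, ∀ b ∈ slopeSet D h y, sInf (slopeSet D h (x+y)) ≤ a + b := by
    rintro a ⟨t, ht, htx, rfl⟩ b ⟨s, hs, hsy, rfl⟩
    have e : (s/(s+t)) • (t • x) + (t/(s+t)) • (s • y) = (s*t/(s+t)) • (x + y) := by
      rw [smul_smul, smul_smul, smul_add]
      congr 2 <;> ring
    have b1 := hc.1 htx hsy (by positivity : 0 ≤ s/(s+t)) (by positivity : 0 ≤ t/(s+t)) (by field_simp)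
    have b2 := hc.2 htx hsy (by positivity : 0 ≤ s/(s+t)) (by positivity : 0 ≤ t/(s+t)) (by field_simp)
    rw [e] at b1 b2
    have hp : 0 < s*t/(s+t) := by positivity
    refine (csInf_le (slope_bdd hD hc h0 _) ⟨s*t/(s+t), hp, b1, rfl⟩).trans ?_
    rw [div_le_iff₀ hp]
    refine b2.trans (le_of_eq ?_)
    simp only [smul_eq_mul, RingHom.id_apply]
    field_simp
  have k2 : ∀ a ∈ slopeSet D h x, sInf (slopeSet D h (x+y)) - a ≤ sInf (slopeSet D h y) := by
    intro a ha
    refine le_csInf (slope_ne h hD y) fun b hb => ?_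
    linarith [key a ha b hb]
  have : sInf (slopeSet D h (x+y)) - sInf (slopeSet D h y) ≤ sInf (slopeSet D h x) := by
    refine le_csInf (slope_ne h hD x) fun a ha => ?_
    linarith [k2 a ha]
  linarith

theorem slope_smul_le {X : Type*} [AddCommGroup X] [Module ℝ X] [TopologicalSpace X]
    [ContinuousSMul ℝ X] {D : Set X} {h : X → ℝ} (hD : D ∈ 𝓝 (0:X))
    (hc : ConvexOn ℝ D h) (h0 : h 0 = 0) (c : ℝ) (hcp : 0 < c) (x : X) :
    sInf (slopeSet D h (c • x)) ≤ c * sInf (slopeSet D h x) := by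
  rw [mul_comm, ← div_le_iff₀ hcp]
  refine le_csInf (slope_ne h hD x) ?_
  rintro a ⟨t, ht, htx, rfl⟩
  have e : (t/c) • (c • x) = t • x := by rw [smul_smul]; congr 1; field_simp
  rw [div_le_iff₀ hcp]
  refine (csInf_le (slope_bdd hD hc h0 _) ⟨t/c, by positivity, by rwa [e], rfl⟩).trans (le_of_eq ?_)
  rw [e]; field_simp

theorem slope_smul {X : Type*} [AddCommGroup X] [Module ℝ X] [TopologicalSpace X]
    [ContinuousSMul ℝ X] {D : Set X} {h : X → ℝ} (hD : D ∈ 𝓝 (0:X))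
    (hc : ConvexOn ℝ D h) (h0 : h 0 = 0) (c : ℝ) (hcp : 0 < c) (x : X) :
    sInf (slopeSet D h (c • x)) = c * sInf (slopeSet D h x) := by
  refine le_antisymm (slope_smul_le hD hc h0 c hcp x) ?_
  have := slope_smul_le hD hc h0 c⁻¹ (by positivity) (c • x)
  rw [smul_smul, inv_mul_cancel₀ hcp.ne', one_smul] at this
  calc c * sInf (slopeSet D h x) ≤ c * (c⁻¹ * sInf (slopeSet D h (c • x))) := by gcongr
    _ = _ := by field_simp

theorem slope_zero {X : Type*} [AddCommGroup X] [Module ℝ X] [TopologicalSpace X]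
    [ContinuousSMul ℝ X] {D : Set X} {h : X → ℝ} (hD : D ∈ 𝓝 (0:X))
    (hc : ConvexOn ℝ D h) (h0 : h 0 = 0) : sInf (slopeSet D h 0) = 0 := by
  have := slope_smul hD hc h0 2 (by norm_num) 0
  rw [smul_zero] at this
  linarith

theorem lin_cont {X : Type*} [AddCommGroup X] [Module ℝ X] [TopologicalSpace X]
    [IsTopologicalAddGroup X] [ContinuousSMul ℝ X] (l : X →ₗ[ℝ] ℝ)
    (hl : ∀ᶠ x in 𝓝 (0:X), l x ≤ 1) : Continuous l := by
  refine continuous_of_continuousAt_zero l ?_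
  rw [ContinuousAt, map_zero, Metric.tendsto_nhds]
  intro ε hε
  have T : ∀ c : ℝ, ∀ᶠ x in 𝓝 (0:X), l (c • x) ≤ 1 := by
    intro c
    have : Continuous (fun x : X => c • x) := by fun_prop
    have := this.tendsto 0
    rw [smul_zero] at this
    exact this.eventually hl
  filter_upwards [T (2/ε), T (-(2/ε))] with x h1 h2
  rw [map_smul, smul_eq_mul] at h1 h2
  rw [Real.dist_eq, sub_zero, abs_lt]
  have e : ε * (2/ε * l x) = 2 * l x := by field_simp
  constructor <;> nlinarith

theorem exists_sub {X : Type*} [AddCommGroup X] [Module ℝ X] [TopologicalSpace X]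
    [IsTopologicalAddGroup X] [ContinuousSMul ℝ X] {D : Set X} {h : X → ℝ} (hD : D ∈ 𝓝 (0:X))
    (hc : ConvexOn ℝ D h) (h0 : h 0 = 0) (hb : ∀ᶠ x in 𝓝 (0:X), h x ≤ 1) (x : X) :
    ∃ l : X →L[ℝ] ℝ, (∀ y, l y ≤ sInf (slopeSet D h y)) ∧ l x = sInf (slopeSet D h x) := by
  set p : X → ℝ := fun y => sInf (slopeSet D h y) with hp
  have padd : ∀ x y, p (x + y) ≤ p x + p y := slope_add hD hc h0
  have psm : ∀ c : ℝ, 0 < c → ∀ x, p (c • x) = c * p x := slope_smul hD hc h0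
  have p0 : p 0 = 0 := slope_zero hD hc h0
  have main : ∃ l : X →ₗ[ℝ] ℝ, (∀ y, l y ≤ p y) ∧ l x = p x := by
    by_cases hx : x = 0
    · obtain ⟨g, -, hg⟩ := exists_extension_of_le_sublinear (⟨⊥, 0⟩ : X →ₗ.[ℝ] ℝ) p psm padd (by
        rintro ⟨y, hy⟩
        rw [Submodule.mem_bot] at hy
        subst hy
        simp [p0])
      exact ⟨g, hg, by rw [hx, map_zero, p0]⟩
    · obtain ⟨g, hg1, hg⟩ := exists_extension_of_le_sublinear (LinearPMap.mkSpanSingleton (K := ℝ) x (p x) hx) p psm padd (by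
        rintro ⟨y, hy⟩
        obtain ⟨c, rfl⟩ := Submodule.mem_span_singleton.1 hy
        rw [LinearPMap.mkSpanSingleton'_apply]
        simp only [smul_eq_mul, RingHom.id_apply]
        rcases lt_trichotomy c 0 with h1 | h1 | h1
        · have a := psm (-c) (by linarith) x
          have b := padd (c • x) ((-c) • x)
          rw [← add_smul, add_neg_cancel, zero_smul, p0] at b
          linarith
        · simp [h1, p0]
        · exact (psm c h1 x).ge)
      refine ⟨g, hg, ?_⟩
      have := hg1 ⟨x, Submodule.mem_span_singleton_self x⟩
      rw [LinearPMap.mkSpanSingleton_apply] at this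
      exact this
  obtain ⟨l, hl, hlx⟩ := main
  refine ⟨⟨l, lin_cont l ?_⟩, hl, hlx⟩
  filter_upwards [hb, hD] with y hy hyD
  refine (hl y).trans (le_trans ?_ hy)
  exact csInf_le (slope_bdd hD hc h0 y) ⟨1, one_pos, by rwa [one_smul], by rw [one_smul, div_one]⟩

theorem exists_one {Z : Type*} [AddCommGroup Z] [Module ℝ Z] [TopologicalSpace Z]
    {zs : Z →L[ℝ] ℝ} (hzs0 : zs ≠ 0) : ∃ e, zs e = 1 := by
  obtain ⟨w, hw⟩ : ∃ w, zs w ≠ 0 := by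
    by_contra! hh
    exact hzs0 (ContinuousLinearMap.ext hh)
  exact ⟨(zs w)⁻¹ • w, by simp [hw]⟩

theorem mem_closure_half {Z : Type*} [AddCommGroup Z] [Module ℝ Z] [TopologicalSpace Z]
    [IsTopologicalAddGroup Z] [ContinuousSMul ℝ Z] {zs : Z →L[ℝ] ℝ} (hzs0 : zs ≠ 0)
    {A : Set Z} {m : ℝ} (hA : ∀ w, zs w < m → w ∈ A) {z : Z} (hz : zs z ≤ m) : z ∈ closure A := by
  obtain ⟨e, he⟩ := exists_one hzs0
  have : Filter.Tendsto (fun s : ℝ => z - s • e) (𝓝[>] 0) (𝓝 z) := by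
    have : Continuous (fun s : ℝ => z - s • e) := by fun_prop
    have := this.tendsto 0
    rw [zero_smul, sub_zero] at this
    exact this.mono_left nhdsWithin_le_nhds
  refine mem_closure_of_tendsto this ?_
  filter_upwards [self_mem_nhdsWithin] with s hs
  apply hA
  have hs : 0 < s := hs
  simp [he]
  linarith

theorem bdd_of_ne_univ {Z : Type*} [AddCommGroup Z] [Module ℝ Z] [TopologicalSpace Z]
    {zs : Z →L[ℝ] ℝ} {A : Set Z}
    (h : oplus A (Hset zs) ≠ Set.univ) : BddAbove (zs '' A) := by
  by_contra hb
  apply h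
  rw [not_bddAbove_iff] at hb
  refine eq_univ_of_forall fun z => subset_closure ?_
  obtain ⟨_, ⟨a, ha, rfl⟩, hlt⟩ := hb (zs z)
  refine ⟨a, ha, z - a, ?_, by simp⟩
  simp [Hset]; linarith

theorem mem_oplus {Z : Type*} [AddCommGroup Z] [Module ℝ Z] [TopologicalSpace Z]
    [IsTopologicalAddGroup Z] [ContinuousSMul ℝ Z] {zs : Z →L[ℝ] ℝ} (hzs0 : zs ≠ 0) {A : Set Z}
    (hb : BddAbove (zs '' A)) (z : Z) :
    z ∈ oplus A (Hset zs) ↔ A.Nonempty ∧ zs z ≤ sSup (zs '' A) := by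
  constructor
  · intro hz
    have hne : (A + Hset zs).Nonempty := by
      rw [← closure_nonempty_iff]; exact ⟨z, hz⟩
    refine ⟨hne.of_add_left, ?_⟩
    have hcl : IsClosed {w | zs w ≤ sSup (zs '' A)} := isClosed_le zs.continuous continuous_const
    refine closure_minimal ?_ hcl hz
    rintro _ ⟨a, ha, b, hb', rfl⟩
    have : zs b ≤ 0 := hb'
    have h2 := le_csSup hb ⟨a, ha, rfl⟩
    simp; linarith
  · rintro ⟨hne, hz⟩
    refine mem_closure_half hzs0 (m := sSup (zs '' A)) ?_ hz
    intro w hw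
    obtain ⟨_, ⟨a, ha, rfl⟩, hlt⟩ := exists_lt_of_lt_csSup (hne.image zs) hw
    refine ⟨a, ha, w - a, ?_, by simp⟩
    simp [Hset]; linarith

theorem mem_resid {Z : Type*} [AddCommGroup Z] [Module ℝ Z] [TopologicalSpace Z]
    [IsTopologicalAddGroup Z] [ContinuousSMul ℝ Z] {zs : Z →L[ℝ] ℝ} (hzs0 : zs ≠ 0) {A B : Set Z}
    (hb : BddAbove (zs '' A)) (hbB : BddAbove (zs '' B)) (hB : B.Nonempty) (z : Z) :
    z ∈ resid zs A B ↔ A.Nonempty ∧ zs z ≤ sSup (zs '' A) - sSup (zs '' B) := by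
  simp only [resid, mem_setOf_eq, mem_oplus hzs0 hb, map_add]
  constructor
  · intro h
    obtain ⟨b, hb⟩ := hB
    refine ⟨(h b hb).1, ?_⟩
    have : sSup (zs '' B) ≤ sSup (zs '' A) - zs z := by
      refine csSup_le ⟨_, b, hb, rfl⟩ ?_
      rintro _ ⟨c, hc, rfl⟩
      linarith [(h c hc).2]
    linarith
  · rintro ⟨h1, h2⟩ b hb
    exact ⟨h1, by linarith [le_csSup hbB ⟨b, hb, rfl⟩]⟩

theorem stmt15 {Z : Type*} [AddCommGroup Z] [Module ℝ Z] [TopologicalSpace Z]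
    [IsTopologicalAddGroup Z] [ContinuousSMul ℝ Z] [LocallyConvexSpace ℝ Z]
    {X : Type*} [AddCommGroup X] [Module ℝ X] [TopologicalSpace X]
    [IsTopologicalAddGroup X] [ContinuousSMul ℝ X] [LocallyConvexSpace ℝ X]
    (C : Set Z) (hCconv : Convex ℝ C) (hC0 : (0:Z) ∈ C)
    (hCcone : ∀ t : ℝ, 0 < t → t • C ⊆ C) (hclC : closure C ≠ Set.univ)
    (zs : Z →L[ℝ] ℝ) (hzs : ∀ z ∈ C, zs z ≤ 0) (hzs0 : zs ≠ 0)
    (f : X → Set Z) (hf : ConvexSV f) (hfG : ∀ x : X, f x ∈ Gset C)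
    (x₀ : X) (hx₀ : f x₀ ≠ ∅)
    (hpdom : ∃ x : X, oplus (f x) (Hset zs) ≠ ∅)
    (hpval : ∀ x : X, oplus (f x) (Hset zs) ≠ Set.univ)
    (husc : UpperSemicontinuousAt (scalFn zs f) x₀) :
    (subdiff zs f x₀).Nonempty ∧
    (∀ x : X, dirDer zs f x₀ x = ⋂ xs ∈ subdiff zs f x₀, Sfun xs zs x) ∧
    (∀ x : X, ∃ xs ∈ subdiff zs f x₀, dirDer zs f x₀ x = Sfun xs zs x) := by
  have hB : ∀ x, BddAbove (zs '' f x) := fun x => bdd_of_ne_univ (hpval x)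
  have hne0 : (f x₀).Nonempty := nonempty_iff_ne_empty.2 hx₀
  obtain ⟨e, he⟩ := exists_one hzs0
  set M : X → ℝ := fun x => sSup (zs '' f x) with hM
  set D : Set X := {x | (f (x₀ + x)).Nonempty} with hDdef
  set h : X → ℝ := fun x => M x₀ - M (x₀ + x) with hh
  have h0 : h 0 = 0 := by simp [hh]
  have h00 : (0:X) ∈ D := by simpa [hDdef] using hne0
  -- neighbourhood
  have hlt : scalFn zs f x₀ < ((1 - M x₀ : ℝ) : EReal) := by
    obtain ⟨_, ⟨a, ha, rfl⟩, hlt⟩ := exists_lt_of_lt_csSup (hne0.image zs)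
      (show M x₀ - 1 < sSup (zs '' f x₀) by simp [hM])
    refine lt_of_le_of_lt (iInf₂_le a ha) ?_
    rw [EReal.coe_lt_coe_iff]; linarith
  have hev : ∀ᶠ x in 𝓝 (0:X), x ∈ D ∧ h x ≤ 1 := by
    have h1 := husc _ hlt
    have hT : Filter.Tendsto (fun x : X => x₀ + x) (𝓝 0) (𝓝 x₀) := by
      have : Continuous (fun x : X => x₀ + x) := by fun_prop
      simpa using this.tendsto 0
    filter_upwards [hT.eventually h1] with x hx
    simp only [scalFn, iInf_lt_iff] at hx
    obtain ⟨a, ha, hlt⟩ := hx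
    rw [EReal.coe_lt_coe_iff] at hlt
    refine ⟨⟨a, ha⟩, ?_⟩
    have := le_csSup (hB (x₀ + x)) ⟨a, ha, rfl⟩
    simp only [hh, hM] at *
    linarith
  have hD : D ∈ 𝓝 (0:X) := hev.mono fun x hx => hx.1
  have hb : ∀ᶠ x in 𝓝 (0:X), h x ≤ 1 := hev.mono fun x hx => hx.2
  -- convexity
  have hc : ConvexOn ℝ D h := by
    have key : ∀ x ∈ D, ∀ y ∈ D, ∀ a b : ℝ, 0 < a → 0 < b → a + b = 1 →
        a • x + b • y ∈ D ∧ h (a • x + b • y) ≤ a • h x + b • h y := by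
      intro x hx y hy a b ha hb' hab
      obtain rfl : b = 1 - a := by linarith
      have hsub := hf (x₀ + x) (x₀ + y) a ha (by linarith)
      have e1 : a • (x₀ + x) + (1 - a) • (x₀ + y) = x₀ + (a • x + (1 - a) • y) := by module
      rw [e1] at hsub
      have hin : ∀ u ∈ f (x₀ + x), ∀ v ∈ f (x₀ + y),
          a • u + (1 - a) • v ∈ f (x₀ + (a • x + (1 - a) • y)) := fun u hu v hv =>
        hsub (subset_closure ⟨_, ⟨u, hu, rfl⟩, _, ⟨v, hv, rfl⟩, rfl⟩)
      obtain ⟨u0, hu0⟩ := hx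
      obtain ⟨v0, hv0⟩ := hy
      refine ⟨⟨_, hin u0 hu0 v0 hv0⟩, ?_⟩
      have k1 : ∀ u ∈ f (x₀ + x), ∀ v ∈ f (x₀ + y),
          a * zs u + (1 - a) * zs v ≤ M (x₀ + (a • x + (1 - a) • y)) := by
        intro u hu v hv
        have := le_csSup (hB _) ⟨_, hin u hu v hv, rfl⟩
        simpa using this
      set m := M (x₀ + (a • x + (1 - a) • y)) with hm
      have k2 : ∀ v ∈ f (x₀ + y), a * M (x₀ + x) + (1 - a) * zs v ≤ m := by
        intro v hv
        have : M (x₀ + x) ≤ (m - (1 - a) * zs v) / a := by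
          refine csSup_le ⟨_, u0, hu0, rfl⟩ ?_
          rintro _ ⟨u, hu, rfl⟩
          rw [le_div_iff₀ ha]
          linarith [k1 u hu v hv]
        rw [le_div_iff₀ ha] at this
        linarith
      have k3 : M (x₀ + y) ≤ (m - a * M (x₀ + x)) / (1 - a) := by
        refine csSup_le ⟨_, v0, hv0, rfl⟩ ?_
        rintro _ ⟨v, hv, rfl⟩
        rw [le_div_iff₀ hb']
        linarith [k2 v hv]
      rw [le_div_iff₀ hb'] at k3
      simp only [hh, smul_eq_mul]
      rw [← hm]
      linarith
    rw [convexOn_iff_forall_pos, convex_iff_forall_pos]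
    exact ⟨fun x hx y hy a b ha hb' hab => (key x hx y hy a b ha hb' hab).1,
      fun x hx y hy a b ha hb' hab => (key x hx y hy a b ha hb' hab).2⟩
  set p : X → ℝ := fun x => sInf (slopeSet D h x) with hp
  -- description of the derivative
  have hmem : ∀ (x : X) (t : ℝ), 0 < t → ∀ z : Z,
      z ∈ (1 / t) • resid zs (f (x₀ + t • x)) (f x₀) ↔ t • x ∈ D ∧ h (t • x) / t ≤ - zs z := by
    intro x t ht z
    rw [one_div, mem_inv_smul_set_iff₀ ht.ne', mem_resid hzs0 (hB _) (hB _) hne0, div_le_iff₀ ht]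
    refine and_congr Iff.rfl ?_
    simp only [map_smul, smul_eq_mul, hh, hM]
    constructor <;> intro _ <;> linarith
  have hder : ∀ x z, z ∈ dirDer zs f x₀ x ↔ p x + zs z ≤ 0 := by
    intro x z
    simp only [dirDer, mem_iInter, mem_Ioi]
    constructor
    · intro hz
      have hcl : IsClosed {w | p x + zs w ≤ 0} :=
        isClosed_le (by fun_prop) continuous_const
      refine closure_minimal ?_ hcl (hz 1 one_pos)
      intro w hw
      simp only [mem_iUnion] at hw
      obtain ⟨t, ht, hw⟩ := hw
      obtain ⟨h1, h2⟩ := (hmem x t ht.1 w).1 hw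
      have := csInf_le (slope_bdd hD hc h0 x) ⟨t, ht.1, h1, rfl⟩
      show sInf (slopeSet D h x) + zs w ≤ 0
      linarith
    · intro hz s hs
      refine mem_closure_half hzs0 (m := - p x) ?_ (by linarith)
      intro w hw
      obtain ⟨_, ⟨t, ht, htx, rfl⟩, hlt⟩ := exists_lt_of_csInf_lt (slope_ne h hD x)
        (show sInf (slopeSet D h x) < - zs w by linarith)
      have hpos : 0 < min t (s/2) := lt_min ht (by linarith)
      obtain ⟨m1, m2⟩ := slope_mono hc h00 h0 hpos (min_le_left _ _) htx
      simp only [mem_iUnion]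
      refine ⟨min t (s/2), ⟨hpos, (min_le_right _ _).trans_lt (by linarith)⟩, ?_⟩
      exact (hmem x _ hpos w).2 ⟨m1, by linarith⟩
  have hsd : ∀ xs : X →L[ℝ] ℝ, (∀ y, xs y ≤ p y) → xs ∈ subdiff zs f x₀ := by
    intro xs hxs y z hz
    rw [hder] at hz
    show xs y + zs z ≤ 0
    linarith [hxs y]
  have hex : ∀ x : X, ∃ xs ∈ subdiff zs f x₀, dirDer zs f x₀ x = Sfun xs zs x := by
    intro x
    obtain ⟨l, hl, hlx⟩ := exists_sub hD hc h0 hb x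
    refine ⟨l, hsd l hl, ?_⟩
    ext z
    rw [hder]
    show _ ↔ l x + zs z ≤ 0
    rw [hlx]
  refine ⟨?_, ?_, hex⟩
  · obtain ⟨l, hl, -⟩ := hex 0
    exact ⟨l, hl⟩
  · intro x
    refine Subset.antisymm (subset_iInter₂ fun xs hxs => hxs x) ?_
    obtain ⟨l, hl, hlx⟩ := hex x
    rw [hlx]
    exact iInter₂_subset l hl
end

section
/- Let f : X → G(Z,C) be convex, x₀ ∈ dom f, x* ∈ X* and z* ∈ C⁻ \ {0} with f(x₀) ⊕ H(z*) ≠ Z. Then the following are equivalent: (a) x* ∈ ∂_{z*} f(x₀); (b) cl ⋃_{x ∈ X} (f(x) + S_{(x*,z*)}(−x)) = f(x₀) ⊕ S_{(x*,z*)}(−x₀); (c) ⋂_{x ∈ X} (S_{(x*,z*)}(x) −_{z*} f(x)) = S_{(x*,z*)}(x₀) −_{z*} f(x₀). -/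
open Set Topology Pointwise

theorem aux_e {Z : Type*} [AddCommGroup Z] [Module ℝ Z] [TopologicalSpace Z]
    (zs : Z →L[ℝ] ℝ) (hzs0 : zs ≠ 0) : ∃ e, zs e = 1 := by
  obtain ⟨v, hv⟩ : ∃ v, zs v ≠ 0 := by
    by_contra! h
    exact hzs0 (ContinuousLinearMap.ext h)
  exact ⟨(zs v)⁻¹ • v, by simp [hv]⟩

theorem aux_cl {Z : Type*} [AddCommGroup Z] [Module ℝ Z] [TopologicalSpace Z]
    [IsTopologicalAddGroup Z] [ContinuousSMul ℝ Z]
    (zs : Z →L[ℝ] ℝ) (hzs0 : zs ≠ 0) (U : Set Z)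
    (hU : ∀ u ∈ U, ∀ w, zs w ≤ zs u → w ∈ U) (z : Z) :
    z ∈ closure U ↔ ∀ ε > 0, ∃ u ∈ U, zs z < zs u + ε := by
  obtain ⟨e, he⟩ := aux_e zs hzs0
  constructor
  · intro h ε hε
    have ho : IsOpen {w | zs z - ε < zs w} := isOpen_lt continuous_const zs.continuous
    obtain ⟨w, hw, hwU⟩ := mem_closure_iff.1 h _ ho (by simp [hε])
    refine ⟨w, hwU, ?_⟩
    have : zs z - ε < zs w := hw
    linarith
  · intro h
    have hc : Filter.Tendsto (fun r : ℝ => z - r • e) (𝓝[>] 0) (𝓝 z) := by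
      have : Continuous (fun r : ℝ => z - r • e) := by fun_prop
      have h2 := this.tendsto 0
      simp only [zero_smul, sub_zero] at h2
      exact h2.mono_left nhdsWithin_le_nhds
    refine mem_closure_of_tendsto hc ?_
    filter_upwards [self_mem_nhdsWithin] with r hr
    obtain ⟨u, hu, hlt⟩ := h r hr
    refine hU u hu _ ?_
    simp [he]
    linarith

theorem aux_oplus {Z : Type*} [AddCommGroup Z] [Module ℝ Z] [TopologicalSpace Z]
    [IsTopologicalAddGroup Z] [ContinuousSMul ℝ Z]
    (zs : Z →L[ℝ] ℝ) (hzs0 : zs ≠ 0) (A : Set Z) (z : Z) :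
    z ∈ oplus A (Hset zs) ↔ ∀ ε > 0, ∃ a ∈ A, zs z < zs a + ε := by
  unfold oplus
  rw [aux_cl zs hzs0]
  · constructor
    · intro h ε hε
      obtain ⟨u, ⟨a, ha, b, hb, rfl⟩, hlt⟩ := h ε hε
      have hb' : zs b ≤ 0 := hb
      refine ⟨a, ha, ?_⟩
      simp only [map_add] at hlt
      linarith
    · intro h ε hε
      obtain ⟨a, ha, hlt⟩ := h ε hε
      exact ⟨a, ⟨a, ha, 0, by simp [Hset], by simp⟩, hlt⟩
  · rintro u ⟨a, ha, b, hb, rfl⟩ w hw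
    have hb' : zs b ≤ 0 := hb
    refine ⟨a, ha, w - a, ?_, by simp⟩
    simp only [map_add] at hw
    simp only [Hset, mem_setOf_eq, map_sub]
    linarith

theorem aux_add {Z : Type*} [AddCommGroup Z] [Module ℝ Z] [TopologicalSpace Z]
    {X : Type*} [AddCommGroup X] [Module ℝ X] [TopologicalSpace X]
    (zs : Z →L[ℝ] ℝ) (xs : X →L[ℝ] ℝ) (A : Set Z) (x : X) (z : Z) :
    z ∈ A + Sfun xs zs (-x) ↔ ∃ b ∈ A, zs z ≤ zs b + xs x := by
  constructor
  · rintro ⟨a, ha, b, hb, rfl⟩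
    have hb' : xs (-x) + zs b ≤ 0 := hb
    refine ⟨a, ha, ?_⟩
    simp only [map_add, map_neg] at *
    linarith
  · rintro ⟨b, hb, h⟩
    refine ⟨b, hb, z - b, ?_, by simp⟩
    simp only [Sfun, mem_setOf_eq, map_sub, map_neg]
    linarith

theorem aux_resS {Z : Type*} [AddCommGroup Z] [Module ℝ Z] [TopologicalSpace Z]
    [IsTopologicalAddGroup Z] [ContinuousSMul ℝ Z]
    {X : Type*} [AddCommGroup X] [Module ℝ X] [TopologicalSpace X]
    (zs : Z →L[ℝ] ℝ) (hzs0 : zs ≠ 0) (xs : X →L[ℝ] ℝ) (A : Set Z) (x : X) (z : Z) :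
    z ∈ resid zs (Sfun xs zs x) A ↔ ∀ b ∈ A, xs x + zs b + zs z ≤ 0 := by
  unfold resid
  simp only [mem_setOf_eq, aux_oplus zs hzs0]
  refine forall₂_congr fun b hb => ?_
  constructor
  · intro h
    refine le_of_forall_pos_le_add fun ε hε => ?_
    obtain ⟨a, ha, hlt⟩ := h ε hε
    have ha' : xs x + zs a ≤ 0 := ha
    simp only [map_add] at hlt
    linarith
  · intro h ε hε
    refine ⟨b + z, ?_, by linarith⟩
    simp only [Sfun, mem_setOf_eq, map_add]
    linarith

theorem stmt16 {Z : Type*} [AddCommGroup Z] [Module ℝ Z] [TopologicalSpace Z]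
    [IsTopologicalAddGroup Z] [ContinuousSMul ℝ Z] [LocallyConvexSpace ℝ Z]
    {X : Type*} [AddCommGroup X] [Module ℝ X] [TopologicalSpace X]
    [IsTopologicalAddGroup X] [ContinuousSMul ℝ X] [LocallyConvexSpace ℝ X]
    (C : Set Z) (hCconv : Convex ℝ C) (hC0 : (0:Z) ∈ C)
    (hCcone : ∀ t : ℝ, 0 < t → t • C ⊆ C) (hclC : closure C ≠ Set.univ)
    (zs : Z →L[ℝ] ℝ) (hzs : ∀ z ∈ C, zs z ≤ 0) (hzs0 : zs ≠ 0)
    (f : X → Set Z) (hf : ConvexSV f) (hfG : ∀ x : X, f x ∈ Gset C)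
    (x₀ : X) (hx₀ : f x₀ ≠ ∅) (xs : X →L[ℝ] ℝ)
    (hx₀H : oplus (f x₀) (Hset zs) ≠ Set.univ) :
    (xs ∈ subdiff zs f x₀ ↔
      closure (⋃ x : X, (f x + Sfun xs zs (-x))) = oplus (f x₀) (Sfun xs zs (-x₀))) ∧
    (xs ∈ subdiff zs f x₀ ↔
      (⋂ x : X, resid zs (Sfun xs zs x) (f x)) = resid zs (Sfun xs zs x₀) (f x₀)) := by
  obtain ⟨e, he⟩ := aux_e zs hzs0
  obtain ⟨M, hM1, hM2⟩ : ∃ M : ℝ, (∀ b ∈ f x₀, zs b ≤ M) ∧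
      ∀ ε > 0, ∃ b ∈ f x₀, M < zs b + ε := by
    obtain ⟨z, hz⟩ := (ne_univ_iff_exists_notMem _).1 hx₀H
    rw [aux_oplus zs hzs0] at hz
    push Not at hz
    obtain ⟨ε, hε, hz⟩ := hz
    have hne : (zs '' f x₀).Nonempty := (nonempty_iff_ne_empty.2 hx₀).image _
    have hb : BddAbove (zs '' f x₀) := by
      refine ⟨zs z, ?_⟩
      rintro _ ⟨a, ha, rfl⟩
      linarith [hz a ha]
    refine ⟨sSup (zs '' f x₀), fun b hb' => le_csSup hb ⟨b, hb', rfl⟩, fun ε hε => ?_⟩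
    obtain ⟨_, ⟨b, hb', rfl⟩, hlt⟩ :=
      exists_lt_of_lt_csSup hne (sub_lt_self (sSup (zs '' f x₀)) hε)
    exact ⟨b, hb', by linarith⟩
  have hK1 : xs ∈ subdiff zs f x₀ ↔ ∀ x, ∀ b ∈ f x, xs x + zs b ≤ xs x₀ + M := by
    constructor
    · intro h x b hb
      have hw : (zs b - M) • e ∈ dirDer zs f x₀ (x - x₀) := by
        unfold dirDer
        refine mem_iInter₂.2 fun s hs => subset_closure ?_
        have hs' : (0:ℝ) < s := hs
        obtain ⟨t, ht0, ht1, hts⟩ : ∃ t : ℝ, 0 < t ∧ t < 1 ∧ t < s := by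
          obtain ⟨t, h0, h1⟩ := exists_between (lt_min one_pos hs')
          exact ⟨t, h0, h1.trans_le (min_le_left _ _), h1.trans_le (min_le_right _ _)⟩
        refine mem_iUnion₂.2 ⟨t, ⟨ht0, hts⟩, ?_⟩
        refine ⟨t • (zs b - M) • e, ?_, by simp [smul_smul, ht0.ne']⟩
        intro b0 hb0
        rw [aux_oplus zs hzs0]
        intro ε hε
        obtain ⟨b1, hb1, hlt⟩ := hM2 ε hε
        refine ⟨t • b + (1 - t) • b1, ?_, ?_⟩
        · have hx : x₀ + t • (x - x₀) = t • x + (1 - t) • x₀ := by module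
          rw [hx]
          exact hf x x₀ t ht0 ht1 (subset_closure
            (add_mem_add (smul_mem_smul_set hb) (smul_mem_smul_set hb1)))
        · have := hM1 b0 hb0
          simp only [map_add, map_smul, smul_eq_mul, he]
          nlinarith
      have h1 : xs (x - x₀) + zs ((zs b - M) • e) ≤ 0 := h _ hw
      simp only [map_sub, map_smul, smul_eq_mul, he] at h1
      linarith
    · intro hK x z hz
      have h1 := mem_iInter₂.1 hz 1 (mem_Ioi.2 one_pos)
      have hcl : IsClosed (Sfun xs zs x) :=
        isClosed_le (continuous_const.add zs.continuous) continuous_const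
      refine closure_minimal ?_ hcl h1
      intro y hy
      obtain ⟨t, ht, w, hw, rfl⟩ := mem_iUnion₂.1 hy
      have ht0 : 0 < t := ht.1
      have key : zs w ≤ - (t * xs x) := by
        refine le_of_forall_pos_le_add fun ε hε => ?_
        obtain ⟨b0, hb0, hlt⟩ := hM2 (ε/2) (by linarith)
        obtain ⟨b, hb, hlt2⟩ := (aux_oplus zs hzs0 _ _).1 (hw b0 hb0) (ε/2) (by linarith)
        have := hK _ b hb
        simp only [map_add, map_smul, smul_eq_mul] at this hlt2
        linarith
      change xs x + zs ((1 / t) • w) ≤ 0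
      simp only [map_smul, smul_eq_mul]
      have h3 : (1 / t) * zs w ≤ (1 / t) * (-(t * xs x)) :=
        mul_le_mul_of_nonneg_left key (by positivity)
      have h4 : (1 / t) * (-(t * xs x)) = - xs x := by field_simp
      linarith
  have hlow : ∀ x : X, ∀ u ∈ f x + Sfun xs zs (-x), ∀ w, zs w ≤ zs u →
      w ∈ f x + Sfun xs zs (-x) := by
    intro x u hu w hw
    rw [aux_add] at hu ⊢
    obtain ⟨b, hb, h⟩ := hu
    exact ⟨b, hb, hw.trans h⟩
  have hR : ∀ z, z ∈ oplus (f x₀) (Sfun xs zs (-x₀)) ↔ zs z ≤ xs x₀ + M := by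
    intro z
    unfold oplus
    rw [aux_cl zs hzs0 _ (hlow x₀)]
    constructor
    · intro h
      refine le_of_forall_pos_le_add fun ε hε => ?_
      obtain ⟨u, hu, hlt⟩ := h ε hε
      obtain ⟨b, hb, hle⟩ := (aux_add _ _ _ _ _).1 hu
      linarith [hM1 b hb]
    · intro h ε hε
      obtain ⟨b, hb, hlt⟩ := hM2 ε hε
      refine ⟨b + (xs x₀) • e, (aux_add _ _ _ _ _).2 ⟨b, hb, ?_⟩, ?_⟩ <;>
      simp only [map_add, map_smul, smul_eq_mul, he] <;> linarith
  rw [hK1]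
  constructor
  · constructor
    · intro hK
      apply Subset.antisymm
      · refine closure_minimal ?_ isClosed_closure
        intro y hy
        obtain ⟨x, hx⟩ := mem_iUnion.1 hy
        obtain ⟨b, hb, h⟩ := (aux_add _ _ _ _ _).1 hx
        exact (hR y).2 (by linarith [hK x b hb])
      · exact closure_mono (subset_iUnion (fun x => f x + Sfun xs zs (-x)) x₀)
    · intro h x b hb
      have : b + (xs x) • e ∈ oplus (f x₀) (Sfun xs zs (-x₀)) := by
        rw [← h]
        refine subset_closure (mem_iUnion.2 ⟨x, (aux_add _ _ _ _ _).2 ⟨b, hb, ?_⟩⟩)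
        simp [he]
      have h2 := (hR _).1 this
      simp only [map_add, map_smul, smul_eq_mul, he] at h2
      linarith
  · constructor
    · intro hK
      apply Subset.antisymm
      · exact iInter_subset _ x₀
      · intro z hz
        rw [aux_resS zs hzs0] at hz
        refine mem_iInter.2 fun x => (aux_resS zs hzs0 _ _ _ _).2 fun b hb => ?_
        refine le_of_forall_pos_le_add fun ε hε => ?_
        obtain ⟨b0, hb0, hlt⟩ := hM2 ε hε
        linarith [hK x b hb, hz b0 hb0]
    · intro h x b hb
      have hz : (-(xs x₀ + M)) • e ∈ resid zs (Sfun xs zs x₀) (f x₀) := by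
        rw [aux_resS zs hzs0]
        intro b0 hb0
        simp only [map_smul, smul_eq_mul, he]
        linarith [hM1 b0 hb0]
      rw [← h] at hz
      have h2 := (aux_resS zs hzs0 _ _ _ _).1 (mem_iInter.1 hz x) b hb
      simp only [map_smul, smul_eq_mul, he] at h2
      linarith
end
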